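/- arXiv:1304.3364 — 3 statements merged into one kernel-verified Lean document; each statement's English description precedes it below -/
import Mathlib

section
/- Let p and q be coprime positive integers and T₁ = 2π/√3. Let f₁, f₂, f₃, f₄ : ℝ³ → ℝ be C² functions that are (pT₁/q)-periodic in their first argument, and let R₁, R₂ : ℝ⁵ × ℝ → ℝ be C² functions that are (pT₁/q)-periodic in their first argument. Consider the perturbed system x'' + 3x = ε(f₁(t,x',y')·x + f₂(t,x',y')·y) + ε²R₁(t,x,x',y,y',ε), y'' + 4y = ε(f₃(t,x',y')·x + f₄(t,x',y')·y) + ε²R₂(t,x,x',y,y',ε). Suppose (X₀*, Y₀*) ≠ (0,0) is a simple zero of the map (𝓕₁, 𝓕₂). Then for every δ > 0 there exists ε₀ > 0 such that for every real ε with 0 < |ε| < ε₀ the system has a pT₁-periodic solution (x, y) : ℝ → ℝ² whose initial data (x(0), x'(0), y(0), y'(0)) lies within distance δ of (X₀*, Y₀*, 0, 0). -/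
/-!
Write `T = 2πp/√3` and let `w` be the state `((x, x'), (y, y'))` seen in the frame that moves with
the free oscillators (`freeFlow`). By variation of constants the system becomes
`w' = ε G(t, w, ε)` with `G = rotatedField` of class `C¹`, and a `T`-periodic solution amounts to a
trajectory on `[0, T]` with `freeFlow T (w T) = w 0`. The `x`-oscillator is resonant, so its
component of `w` must have zero increment, `∫₀ᵀ G₁ = 0`. The `y`-oscillator is not, since
`2T ∉ 2πℤ` (irrationality of `√3`), so `1 - K` is invertible, where `K` is its free flow over
`[0, T]`, and the condition reads `w₂(0) = S (w₂(T) - w₂(0))` with `S = (1 - K)⁻¹ K`.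

These equations are solved by the contraction principle in
`exists_solution_of_nondegenerate_average`. With `w = (a, 0) + η k` they take the fixed-point form
`a = a - J⁻¹ ∫₀ᵀ G₁`, `k = (ε / η) ((0, S ∫₀ᵀ G₂) + ∫₀ᵗ G)`, where `J` is the derivative of the
averaged map `u ↦ ∫₀ᵀ G₁(s, (u, 0), 0) ds` at its zero `u₀`. The first line is nearly independent of
`a` near `u₀`, and depends on `k` only through `η k`; the second carries the factor `ε / η`. So the
map is a `1/2`-contraction of a small ball for `η` small and then `ε` small. The averaged map is
`𝓕` up to an invertible diagonal matrix, which makes `J` invertible.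

The trajectory on `[0, T]` is extended to the line in `exists_periodic_solution`: its periodic
extension gives a periodic forcing, and the oscillator driven by this forcing is periodic by
conservation of energy for the difference with its translate, hence equals the extension.
-/

open Real

namespace Dumbbell

open Set

lemma exists_fixedPoint_of_half_lipschitz {X : Type*} [NormedAddCommGroup X] [CompleteSpace X]
    (Ψ : X → X) (x₀ : X) {ρ : ℝ} (hρ : 0 ≤ ρ)
    (hL : ∀ x ∈ Metric.closedBall x₀ ρ, ∀ y ∈ Metric.closedBall x₀ ρ,
      ‖Ψ x - Ψ y‖ ≤ 1 / 2 * ‖x - y‖)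
    (h0 : ‖Ψ x₀ - x₀‖ ≤ ρ / 2) :
    ∃ x ∈ Metric.closedBall x₀ ρ, Ψ x = x := by
  have hmaps : MapsTo Ψ (Metric.closedBall x₀ ρ) (Metric.closedBall x₀ ρ) := by
    intro x hx
    have h1 := hL x hx x₀ (Metric.mem_closedBall_self hρ)
    rw [mem_closedBall_iff_norm] at hx ⊢
    have h2 : ‖Ψ x - x₀‖ ≤ ‖Ψ x - Ψ x₀‖ + ‖Ψ x₀ - x₀‖ := norm_sub_le_norm_sub_add_norm_sub _ _ _
    linarith
  have hc : ContractingWith (1 / 2) (hmaps.restrict Ψ _ _) := by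
    refine ⟨by rw [← NNReal.coe_lt_coe]; norm_num, LipschitzWith.of_dist_le_mul fun x y => ?_⟩
    have := hL x x.2 y y.2
    simpa [Subtype.dist_eq, dist_eq_norm] using this
  obtain ⟨y, hy, hfix, -⟩ := hc.exists_fixedPoint' Metric.isClosed_closedBall.isComplete hmaps
    (Metric.mem_closedBall_self hρ) (edist_ne_top _ _)
  exact ⟨y, hy, hfix⟩

/-! ### Averaging for `w' = ε G(t, w, ε)` with a boundary condition -/

section Averaging

variable {V : Type*} [NormedAddCommGroup V] [NormedSpace ℝ V]

/-- The partial derivative of `G (s, w, e)` in `w` at `(s, w₀, 0)`. -/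
noncomputable def stateDeriv (G : ℝ × V × ℝ → V) (w₀ : V) (s : ℝ) : V →L[ℝ] V :=
  (fderiv ℝ G (s, w₀, 0)).comp
    ((ContinuousLinearMap.inr ℝ ℝ (V × ℝ)).comp (ContinuousLinearMap.inl ℝ V ℝ))

lemma continuous_stateDeriv {G : ℝ × V × ℝ → V} (hG : ContDiff ℝ 1 G) (w₀ : V) :
    Continuous (stateDeriv G w₀) := by
  have h : Continuous (fderiv ℝ G) := hG.continuous_fderiv (by norm_num)
  unfold stateDeriv
  fun_prop

/-- A condition on `(s, w, e)` that is open around `[0, T] × {w₀} × {0}` holds on a uniform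
tube around it. -/
lemma exists_tube {V : Type*} [NormedAddCommGroup V] {T : ℝ} {w₀ : V} {p : ℝ × V × ℝ → Prop}
    (h : ∀ s ∈ Icc 0 T, ∀ᶠ z in nhds (s, w₀, (0 : ℝ)), p z) :
    ∃ r > 0, ∀ s ∈ Icc 0 T, ∀ w ∈ Metric.closedBall w₀ r, ∀ e : ℝ, |e| ≤ r → p (s, w, e) := by
  have h1 : ∀ᶠ y in nhds (w₀, (0 : ℝ)), ∀ s ∈ Icc (0 : ℝ) T, p (s, y) :=
    isCompact_Icc.eventually_forall_of_forall_eventually fun s hs => by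
      exact (continuous_swap.tendsto ((w₀, (0 : ℝ)), s)).eventually (h s hs)
  obtain ⟨r, hr, hb⟩ := Metric.nhds_basis_closedBall.eventually_iff.1 h1
  refine ⟨r, hr, fun s hs w hw e he => ?_⟩
  refine hb (x := (w, e)) ?_ s hs
  rw [← closedBall_prod_same]
  exact ⟨hw, by simpa using he⟩

/-- Uniform strict differentiability of `G` in the state variable along `[0, T]`. -/
lemma exists_tube_linear_approx {G : ℝ × V × ℝ → V} (hG : ContDiff ℝ 1 G) (T : ℝ) (w₀ : V)
    {c : ℝ} (hc : 0 < c) :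
    ∃ r > 0, ∀ s ∈ Icc 0 T, ∀ w ∈ Metric.closedBall w₀ r, ∀ w' ∈ Metric.closedBall w₀ r,
      ∀ e : ℝ, |e| ≤ r →
        ‖G (s, w, e) - G (s, w', e) - stateDeriv G w₀ s (w - w')‖ ≤ c * ‖w - w'‖ := by
  let ι : V →L[ℝ] ℝ × V × ℝ :=
    (ContinuousLinearMap.inr ℝ ℝ (V × ℝ)).comp (ContinuousLinearMap.inl ℝ V ℝ)
  have hcont : Continuous (fun z : ℝ × V × ℝ => (fderiv ℝ G z).comp ι) := by
    have h : Continuous (fderiv ℝ G) := hG.continuous_fderiv (by norm_num)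
    fun_prop
  have hs : Continuous (fun z : ℝ × V × ℝ => stateDeriv G w₀ z.1) :=
    (continuous_stateDeriv hG w₀).comp continuous_fst
  obtain ⟨r, hr, h⟩ := exists_tube (T := T) (w₀ := w₀)
    (p := fun z => ‖(fderiv ℝ G z).comp ι - stateDeriv G w₀ z.1‖ < c) (fun s _ => by
      refine (hcont.sub hs).norm.continuousAt.eventually_lt continuousAt_const ?_
      simpa [stateDeriv, ι] using hc)
  refine ⟨r, hr, fun s hs w hw w' hw' e he => ?_⟩
  refine (convex_closedBall w₀ r).norm_image_sub_le_of_norm_hasFDerivWithin_le'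
    (f := fun w => G (s, w, e)) (f' := fun w => (fderiv ℝ G (s, w, e)).comp ι)
    (fun v hv => ?_) (fun v hv => (h s hs v hv e he).le) hw' hw
  have h1 : HasFDerivAt G (fderiv ℝ G (s, v, e)) (s, v, e) :=
    (hG.differentiable (by norm_num) _).hasFDerivAt
  have h2 : HasFDerivAt (fun w : V => ((s, w, e) : ℝ × V × ℝ)) ι v := by
    have := (hasFDerivAt_const s v).prodMk ((hasFDerivAt_id (𝕜 := ℝ) v).prodMk (hasFDerivAt_const e v))
    exact this
  exact (HasFDerivAt.comp v h1 h2).hasFDerivWithinAt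

lemma exists_tube_bound {V : Type*} [NormedAddCommGroup V] {G : ℝ × V × ℝ → V} (hG : Continuous G) (T : ℝ) (w₀ : V) :
    ∃ M > 0, ∃ r > 0, ∀ s ∈ Icc 0 T, ∀ w ∈ Metric.closedBall w₀ r, ∀ e : ℝ, |e| ≤ r →
      ‖G (s, w, e)‖ ≤ M := by
  obtain ⟨M, hM⟩ := isCompact_Icc.exists_bound_of_continuousOn (s := Icc (0 : ℝ) T)
    (f := fun s => G (s, w₀, 0)) (by fun_prop)
  obtain ⟨r, hr, h⟩ := exists_tube (T := T) (w₀ := w₀) (p := fun z => ‖G z‖ < |M| + 1)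
    (fun s hs => hG.norm.continuousAt.eventually_lt continuousAt_const (by
      have := hM s hs
      have := le_abs_self M
      linarith))
  exact ⟨|M| + 1, by positivity, r, hr, fun s hs w hw e he => (h s hs w hw e he).le⟩

lemma exists_tube_continuity {V : Type*} [NormedAddCommGroup V] {G : ℝ × V × ℝ → V} (hG : Continuous G) (T : ℝ) (w₀ : V)
    {c : ℝ} (hc : 0 < c) :
    ∃ r > 0, ∀ s ∈ Icc 0 T, ∀ e : ℝ, |e| ≤ r → ‖G (s, w₀, e) - G (s, w₀, 0)‖ ≤ c := by
  obtain ⟨r, hr, h⟩ := exists_tube (T := T) (w₀ := w₀)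
    (p := fun z => ‖G z - G (z.1, w₀, 0)‖ < c)
    (fun s hs => by
      refine ContinuousAt.eventually_lt (Continuous.continuousAt (by fun_prop))
        continuousAt_const ?_
      simpa using hc)
  exact ⟨r, hr, fun s hs e he => (h s hs w₀ (Metric.mem_closedBall_self hr.le) e he).le⟩

variable {P Q : Type*} [NormedAddCommGroup P] [NormedSpace ℝ P]
  [NormedAddCommGroup Q] [NormedSpace ℝ Q]

/-- The linear approximation of the averaged `P`-component, uniformly over pairs of curves that
stay near the constant curve `w₀`. -/
lemma exists_average_linear_approx {G : ℝ × (P × Q) × ℝ → P × Q} (hG : ContDiff ℝ 1 G) {T : ℝ}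
    (hT : 0 < T) (w₀ : P × Q) {c : ℝ} (hc : 0 < c) :
    ∃ r > 0, ∀ e : ℝ, |e| ≤ r → ∀ w w' : ℝ → P × Q, Continuous w → Continuous w' →
      (∀ s ∈ Icc 0 T, w s ∈ Metric.closedBall w₀ r) →
      (∀ s ∈ Icc 0 T, w' s ∈ Metric.closedBall w₀ r) →
      ∀ N : ℝ, (∀ s ∈ Icc 0 T, ‖w s - w' s‖ ≤ N) →
        ‖(∫ s in 0..T, (G (s, w s, e)).1) - (∫ s in 0..T, (G (s, w' s, e)).1)
          - ∫ s in 0..T, (stateDeriv G w₀ s (w s - w' s)).1‖ ≤ c * N := by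
  obtain ⟨r, hr, h⟩ := exists_tube_linear_approx hG T w₀ (c := c / T) (by positivity)
  refine ⟨r, hr, fun e he w w' hw hw' hwr hwr' N hN => ?_⟩
  have hGc := hG.continuous
  have hD := continuous_stateDeriv hG w₀
  rw [← intervalIntegral.integral_sub
      (Continuous.intervalIntegrable (by fun_prop) _ _)
      (Continuous.intervalIntegrable (by fun_prop) _ _),
    ← intervalIntegral.integral_sub
      (Continuous.intervalIntegrable (by fun_prop) _ _)
      (Continuous.intervalIntegrable (by fun_prop) _ _)]
  have key := intervalIntegral.norm_integral_le_of_norm_le_const (a := 0) (b := T) (C := c / T * N)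
    (f := fun s => (G (s, w s, e)).1 - (G (s, w' s, e)).1 - (stateDeriv G w₀ s (w s - w' s)).1)
    (fun s hs => by
      rw [uIoc_of_le hT.le] at hs
      have hs' : s ∈ Icc 0 T := ⟨hs.1.le, hs.2⟩
      calc _ = ‖(G (s, w s, e) - G (s, w' s, e) - stateDeriv G w₀ s (w s - w' s)).1‖ := by simp
        _ ≤ ‖G (s, w s, e) - G (s, w' s, e) - stateDeriv G w₀ s (w s - w' s)‖ := norm_fst_le _
        _ ≤ c / T * ‖w s - w' s‖ := h s hs' _ (hwr s hs') _ (hwr' s hs') e he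
        _ ≤ c / T * N := by gcongr; exact hN s hs')
  refine key.trans_eq ?_
  rw [sub_zero, abs_of_pos hT]
  field_simp

/-- Differentiation of the averaged map under the integral sign, at one point. -/
lemma jacobian_eq_integral [CompleteSpace P] {G : ℝ × (P × Q) × ℝ → P × Q} (hG : ContDiff ℝ 1 G) {T : ℝ}
    (hT : 0 < T) (u₀ : P) {J : P →L[ℝ] P}
    (hJ : HasFDerivAt (fun u => ∫ s in 0..T, (G (s, (u, 0), 0)).1) J u₀) (a : P) :
    J a = ∫ s in 0..T, (stateDeriv G (u₀, 0) s (a, 0)).1 := by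
  have hD := continuous_stateDeriv hG ((u₀, 0) : P × Q)
  let L : ℝ → P →L[ℝ] P := fun s => (ContinuousLinearMap.fst ℝ P Q).comp
    ((stateDeriv G (u₀, 0) s).comp (ContinuousLinearMap.inl ℝ P Q))
  have hL : Continuous L := by fun_prop
  have hLa : ∀ b, (∫ s in 0..T, L s) b = ∫ s in 0..T, (stateDeriv G (u₀, 0) s (b, 0)).1 :=
    fun b => by
      rw [ContinuousLinearMap.intervalIntegral_apply (hL.intervalIntegrable _ _)]
      rfl
  rw [← hLa]
  refine congrArg (fun A : P →L[ℝ] P => A a) (hJ.unique ?_)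
  refine HasFDerivAt.of_isLittleO (Asymptotics.isLittleO_iff.2 fun c hc => ?_)
  obtain ⟨r, hr, h⟩ := exists_average_linear_approx hG hT ((u₀, 0) : P × Q) hc
  filter_upwards [Metric.closedBall_mem_nhds u₀ hr] with u hu
  rw [hLa]
  have := h 0 (by simpa using hr.le) (fun _ => (u, 0)) (fun _ => (u₀, 0)) continuous_const
    continuous_const (fun _ _ => by simpa [Prod.dist_eq] using hu)
    (fun _ _ => Metric.mem_closedBall_self hr.le) ‖u - u₀‖ (fun _ _ => by simp [Prod.norm_def])
  simpa using this

/-- The primitive `(0, S ∫₀ᵀ g₂) + ∫₀ᵗ g` of `g`: its `P`-component starts at `0`, and its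
`Q`-component at `S` of the increment over `[0, T]`. -/
noncomputable def primitiveWithBoundary (S : Q →L[ℝ] Q) (T : ℝ) (g : ℝ → P × Q) (t : ℝ) : P × Q :=
  (0, S (∫ s in 0..T, (g s).2)) + ∫ s in 0..t, g s

lemma continuous_primitiveWithBoundary (S : Q →L[ℝ] Q) (T : ℝ) {g : ℝ → P × Q}
    (hg : Continuous g) : Continuous (primitiveWithBoundary S T g) :=
  continuous_const.add
    (intervalIntegral.continuous_primitive (fun _ _ => hg.intervalIntegrable _ _) _)

lemma primitiveWithBoundary_sub (S : Q →L[ℝ] Q) (T : ℝ) {g g' : ℝ → P × Q}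
    (hg : Continuous g) (hg' : Continuous g') (t : ℝ) :
    primitiveWithBoundary S T g t - primitiveWithBoundary S T g' t =
      primitiveWithBoundary S T (fun s => g s - g' s) t := by
  unfold primitiveWithBoundary
  simp only [Prod.snd_sub]
  rw [intervalIntegral.integral_sub (hg.intervalIntegrable _ _) (hg'.intervalIntegrable _ _),
    intervalIntegral.integral_sub (hg.snd.intervalIntegrable _ _) (hg'.snd.intervalIntegrable _ _),
    map_sub, add_sub_add_comm]
  simp

lemma norm_primitiveWithBoundary_le (S : Q →L[ℝ] Q) {T m : ℝ} (hT : 0 < T) {g : ℝ → P × Q}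
    (hm : ∀ s ∈ Icc 0 T, ‖g s‖ ≤ m) {t : ℝ} (ht : t ∈ Icc 0 T) :
    ‖primitiveWithBoundary S T g t‖ ≤ (‖S‖ + 1) * T * m := by
  have hm0 : 0 ≤ m := (norm_nonneg _).trans (hm 0 ⟨le_rfl, hT.le⟩)
  have h1 : ‖∫ s in 0..T, (g s).2‖ ≤ m * |T - 0| :=
    intervalIntegral.norm_integral_le_of_norm_le_const fun s hs => by
      rw [uIoc_of_le hT.le] at hs
      exact (norm_snd_le _).trans (hm s ⟨hs.1.le, hs.2⟩)
  have h2 : ‖∫ s in 0..t, g s‖ ≤ m * |t - 0| :=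
    intervalIntegral.norm_integral_le_of_norm_le_const fun s hs => by
      rw [uIoc_of_le ht.1] at hs
      exact hm s ⟨hs.1.le, hs.2.trans ht.2⟩
  rw [sub_zero, abs_of_pos hT] at h1
  rw [sub_zero, abs_of_nonneg ht.1] at h2
  have h3 : ‖((0, S (∫ s in 0..T, (g s).2)) : P × Q)‖ ≤ ‖S‖ * (m * T) := by
    have : ‖S (∫ s in 0..T, (g s).2)‖ ≤ ‖S‖ * (m * T) :=
      (S.le_opNorm _).trans (by gcongr)
    simpa [Prod.norm_def] using this
  have h4 : m * t ≤ m * T := by gcongr; exact ht.2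
  calc _ ≤ ‖S‖ * (m * T) + m * T := (norm_add_le _ _).trans (by linarith)
    _ = _ := by ring

/-- Averaging principle. The averaged `P`-component has the nondegenerate zero `u₀` at `ε = 0`;
then for small `ε` the equation `w' = ε G(t, w, ε)` has a solution on `[0, T]` near `(u₀, 0)` whose
`P`-component has zero increment over `[0, T]`, and whose `Q`-component starts at `S` of its
increment. -/
theorem exists_solution_of_nondegenerate_average [CompleteSpace P]
    [CompleteSpace Q] {G : ℝ × (P × Q) × ℝ → P × Q}
    (hG : ContDiff ℝ 1 G) {T : ℝ} (hT : 0 < T) (S : Q →L[ℝ] Q) (u₀ : P) (J : P ≃L[ℝ] P)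
    (h0 : ∫ s in 0..T, (G (s, (u₀, 0), 0)).1 = 0)
    (hJ : HasFDerivAt (fun u => ∫ s in 0..T, (G (s, (u, 0), 0)).1) (J : P →L[ℝ] P) u₀)
    {δ : ℝ} (hδ : 0 < δ) :
    ∃ ε₀ > 0, ∀ ε : ℝ, |ε| < ε₀ → ∃ w : ℝ → P × Q, Continuous w ∧
      (∀ t ∈ Icc 0 T, w t = w 0 + ε • ∫ s in 0..t, G (s, w s, ε)) ∧
      ∫ s in 0..T, (G (s, w s, ε)).1 = 0 ∧
      (w 0).2 = ε • S (∫ s in 0..T, (G (s, w s, ε)).2) ∧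
      ‖w 0 - (u₀, 0)‖ < δ := by
  have hGc := hG.continuous
  have hD := continuous_stateDeriv hG ((u₀, 0) : P × Q)
  set w₀ : P × Q := (u₀, 0) with hw₀
  set B : ℝ := ‖(J.symm : P →L[ℝ] P)‖ with hB
  have hB0 : 0 ≤ B := norm_nonneg _
  obtain ⟨M₁', hM₁'⟩ := isCompact_Icc.exists_bound_of_continuousOn (s := Icc (0 : ℝ) T)
    hD.continuousOn
  obtain ⟨M₁, hM₁0, hM₁⟩ : ∃ M₁ : ℝ, 0 ≤ M₁ ∧ ∀ s ∈ Icc 0 T, ‖stateDeriv G w₀ s‖ ≤ M₁ :=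
    ⟨|M₁'|, abs_nonneg _, fun s hs => (hM₁' s hs).trans (le_abs_self _)⟩
  set c : ℝ := 1 / (8 * (B + 1)) with hc
  have hc0 : 0 < c := by positivity
  have hBc : B * c ≤ 1 / 8 := by
    rw [hc, mul_one_div, div_le_iff₀ (by positivity)]; linarith
  set η : ℝ := 1 / (4 * (B * T * M₁ + 1)) with hη
  have hη0 : 0 < η := by positivity
  have hη1 : η ≤ 1 := by
    rw [hη, div_le_one (by positivity)]
    have : 0 ≤ B * T * M₁ := by positivity
    linarith
  have hBη : B * T * M₁ * η ≤ 1 / 4 := by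
    rw [hη, mul_one_div, div_le_iff₀ (by positivity)]; linarith
  obtain ⟨r₁, hr₁, H₁⟩ := exists_average_linear_approx hG hT w₀ hc0
  obtain ⟨r₂, hr₂, H₂⟩ := exists_tube_linear_approx hG T w₀ one_pos
  obtain ⟨M₂, hM₂, r₃, hr₃, H₃⟩ := exists_tube_bound hGc T w₀
  obtain ⟨r, hr, hr1, hr2, hr3, hrδ⟩ :
      ∃ r > 0, r ≤ r₁ ∧ r ≤ r₂ ∧ r ≤ r₃ ∧ r < δ :=
    ⟨min (min r₁ r₂) (min r₃ (δ / 2)), by positivity,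
      (min_le_left _ _).trans (min_le_left _ _), (min_le_left _ _).trans (min_le_right _ _),
      (min_le_right _ _).trans (min_le_left _ _),
      ((min_le_right _ _).trans (min_le_right _ _)).trans_lt (by linarith)⟩
  set ρ : ℝ := r / 2 with hρ
  have hρ0 : 0 < ρ := by positivity
  obtain ⟨r₄, hr₄, H₄⟩ := exists_tube_continuity hGc T w₀ (c := ρ / (2 * (B * T + 1)))
    (by positivity)
  refine ⟨min (min r r₄) (min (η / (4 * ((‖S‖ + 1) * T * (1 + M₁))))
    (η * ρ / (2 * ((‖S‖ + 1) * T * M₂)))), by positivity, fun ε hε => ?_⟩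
  simp only [lt_min_iff] at hε
  obtain ⟨⟨hεr, hεr₄⟩, hεk, hεb⟩ := hε
  rw [lt_div_iff₀ (by positivity)] at hεk hεb
  -- `curve (a, k)` is the candidate `(a, 0) + η k`; the weight `η` makes the averaged equation
  -- depend weakly on `k`.
  let curve : P × C(Icc (0 : ℝ) T, P × Q) → ℝ → P × Q :=
    fun z s => (z.1, 0) + η • IccExtend hT.le z.2 s
  have hcurve : ∀ z, Continuous (curve z) := fun z => by
    have : Continuous (IccExtend hT.le z.2) := z.2.continuous.Icc_extend'
    fun_prop
  have hGcurve : ∀ z, Continuous (fun s => G (s, curve z s, ε)) := fun z => by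
    have := hcurve z
    fun_prop
  let Ψ : P × C(Icc (0 : ℝ) T, P × Q) → P × C(Icc (0 : ℝ) T, P × Q) := fun z =>
    (z.1 - J.symm (∫ s in 0..T, (G (s, curve z s, ε)).1),
      ⟨fun t => (ε / η) • primitiveWithBoundary S T (fun s => G (s, curve z s, ε)) t,
        Continuous.const_smul ((continuous_primitiveWithBoundary S T (hGcurve z)).comp
          continuous_subtype_val) (ε / η)⟩)
  have hdiff' : ∀ z z' s, ‖curve z s - curve z' s - (z.1 - z'.1, 0)‖ ≤ η * ‖z - z'‖ :=
    fun z z' s => by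
      have e1 : curve z s - curve z' s - (z.1 - z'.1, 0) =
          η • (z - z').2 (projIcc 0 T hT.le s) := by
        simp only [curve, IccExtend, Function.comp, Prod.snd_sub, ContinuousMap.sub_apply,
          smul_sub, add_sub_add_comm]
        simp
      rw [e1, norm_smul, Real.norm_of_nonneg hη0.le]
      gcongr
      exact (ContinuousMap.norm_coe_le_norm _ _).trans (norm_snd_le _)
  have hdiff : ∀ z z' s, ‖curve z s - curve z' s‖ ≤ (1 + η) * ‖z - z'‖ := fun z z' s => by
    have e2 : ‖((z.1 - z'.1, 0) : P × Q)‖ ≤ ‖z - z'‖ := by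
      simp [Prod.norm_def]
    have e3 := norm_le_norm_sub_add (curve z s - curve z' s) (z.1 - z'.1, 0)
    have e4 := hdiff' z z' s
    linarith
  have hcurve0 : ∀ s, curve (u₀, 0) s = w₀ := fun s => by
    simp [curve, IccExtend, hw₀]
  have hball : ∀ z ∈ Metric.closedBall ((u₀, 0) : P × C(Icc (0 : ℝ) T, P × Q)) ρ, ∀ s,
      curve z s ∈ Metric.closedBall w₀ r := fun z hz s => by
    rw [mem_closedBall_iff_norm] at hz ⊢
    have := hdiff z (u₀, 0) s
    rw [hcurve0] at this
    refine this.trans ?_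
    calc (1 + η) * ‖z - (u₀, 0)‖ ≤ 2 * ρ := by gcongr; linarith
      _ = r := by rw [hρ]; ring
  have hLip : ∀ z ∈ Metric.closedBall ((u₀, 0) : P × C(Icc (0 : ℝ) T, P × Q)) ρ,
      ∀ z' ∈ Metric.closedBall ((u₀, 0) : P × C(Icc (0 : ℝ) T, P × Q)) ρ,
      ‖Ψ z - Ψ z'‖ ≤ 1 / 2 * ‖z - z'‖ := by
    intro z hz z' hz'
    have hN : 0 ≤ ‖z - z'‖ := norm_nonneg _
    refine max_le ?_ ?_
    · -- `J.symm` is the exact inverse of the derivative of the averaged map in `a`, so only the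
      -- nonlinear error and the `η`-weighted dependence on `k` remain.
      have e1 := H₁ ε (hεr.le.trans hr1) (curve z) (curve z') (hcurve z) (hcurve z')
        (fun s _ => Metric.closedBall_subset_closedBall hr1 (hball z hz s))
        (fun s _ => Metric.closedBall_subset_closedBall hr1 (hball z' hz' s)) _
        (fun s _ => hdiff z z' s)
      have e2 : ‖(∫ s in 0..T, (stateDeriv G w₀ s (curve z s - curve z' s)).1) - J (z.1 - z'.1)‖
          ≤ M₁ * (η * ‖z - z'‖) * T := by
        have hz1 := hcurve z
        have hz1' := hcurve z'
        rw [show J (z.1 - z'.1) = _ from jacobian_eq_integral hG hT u₀ hJ (z.1 - z'.1),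
          ← intervalIntegral.integral_sub (Continuous.intervalIntegrable (by fun_prop) _ _)
            (Continuous.intervalIntegrable (by fun_prop) _ _)]
        have := intervalIntegral.norm_integral_le_of_norm_le_const (a := 0) (b := T)
          (C := M₁ * (η * ‖z - z'‖))
          (f := fun s => (stateDeriv G w₀ s (curve z s - curve z' s)).1 -
            (stateDeriv G w₀ s (z.1 - z'.1, 0)).1) (fun s hs => by
              rw [uIoc_of_le hT.le] at hs
              rw [← Prod.fst_sub, ← map_sub]
              refine (norm_fst_le _).trans ((ContinuousLinearMap.le_opNorm _ _).trans ?_)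
              gcongr
              · exact hM₁ s ⟨hs.1.le, hs.2⟩
              · exact hdiff' z z' s)
        rwa [sub_zero, abs_of_pos hT] at this
      set I := ∫ s in 0..T, (G (s, curve z s, ε)).1 with hI
      set I' := ∫ s in 0..T, (G (s, curve z' s, ε)).1 with hI'
      have e3 : (Ψ z - Ψ z').1 = -(J.symm : P →L[ℝ] P) (I - I' - J (z.1 - z'.1)) := by
        have : (Ψ z - Ψ z').1 = z.1 - J.symm I - (z'.1 - J.symm I') := rfl
        rw [this]
        simp only [map_sub, ContinuousLinearEquiv.coe_coe, ContinuousLinearEquiv.symm_apply_apply]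
        abel
      have e4 : ‖I - I' - J (z.1 - z'.1)‖ ≤
          c * ((1 + η) * ‖z - z'‖) + M₁ * (η * ‖z - z'‖) * T :=
        (norm_sub_le_norm_sub_add_norm_sub _ _ _).trans (add_le_add e1 e2)
      rw [e3, norm_neg]
      calc _ ≤ B * ‖I - I' - J (z.1 - z'.1)‖ := ContinuousLinearMap.le_opNorm _ _
        _ ≤ B * (c * ((1 + η) * ‖z - z'‖) + M₁ * (η * ‖z - z'‖) * T) := by gcongr
        _ = (B * c * (1 + η) + B * T * M₁ * η) * ‖z - z'‖ := by ring
        _ ≤ (1 / 8 * (1 + 1) + 1 / 4) * ‖z - z'‖ := by gcongr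
        _ = 1 / 2 * ‖z - z'‖ := by ring
    · refine (ContinuousMap.norm_le _ (by positivity)).2 fun t => ?_
      have e1 : (Ψ z - Ψ z').2 t = (ε / η) • primitiveWithBoundary S T
          (fun s => G (s, curve z s, ε) - G (s, curve z' s, ε)) t := by
        rw [← primitiveWithBoundary_sub S T (hGcurve z) (hGcurve z'), smul_sub]
        rfl
      have e2 : ∀ s ∈ Icc 0 T, ‖G (s, curve z s, ε) - G (s, curve z' s, ε)‖ ≤
          (1 + M₁) * (2 * ‖z - z'‖) := fun s hs => by
        have f1 := H₂ s hs _ (Metric.closedBall_subset_closedBall hr2 (hball z hz s))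
          _ (Metric.closedBall_subset_closedBall hr2 (hball z' hz' s)) ε (hεr.le.trans hr2)
        have f2 := (stateDeriv G w₀ s).le_of_opNorm_le (hM₁ s hs) (curve z s - curve z' s)
        have f3 := norm_le_norm_sub_add (G (s, curve z s, ε) - G (s, curve z' s, ε))
          (stateDeriv G w₀ s (curve z s - curve z' s))
        have f4 : ‖curve z s - curve z' s‖ ≤ 2 * ‖z - z'‖ :=
          (hdiff z z' s).trans (by gcongr; linarith)
        calc _ ≤ (1 + M₁) * ‖curve z s - curve z' s‖ := by linarith
          _ ≤ _ := by gcongr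
      rw [e1, norm_smul, norm_div, Real.norm_eq_abs, Real.norm_of_nonneg hη0.le]
      calc _ ≤ |ε| / η * ((‖S‖ + 1) * T * ((1 + M₁) * (2 * ‖z - z'‖))) := by
            gcongr
            exact norm_primitiveWithBoundary_le S hT e2 t.2
        _ = |ε| * (4 * ((‖S‖ + 1) * T * (1 + M₁))) / η * (1 / 2 * ‖z - z'‖) := by ring
        _ ≤ 1 * (1 / 2 * ‖z - z'‖) := by
            gcongr
            rw [div_le_one hη0]
            exact hεk.le
        _ = _ := one_mul _
  have hinit : ‖Ψ (u₀, 0) - (u₀, 0)‖ ≤ ρ / 2 := by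
    refine max_le ?_ ?_
    · have e1 : (Ψ (u₀, 0) - (u₀, 0)).1 = -(J.symm : P →L[ℝ] P)
          (∫ s in 0..T, ((G (s, w₀, ε)).1 - (G (s, w₀, 0)).1)) := by
        rw [intervalIntegral.integral_sub (Continuous.intervalIntegrable (by fun_prop) _ _)
          (Continuous.intervalIntegrable (by fun_prop) _ _), h0, sub_zero]
        simp only [Ψ, hcurve0]
        simp
      have e2 := intervalIntegral.norm_integral_le_of_norm_le_const (a := 0) (b := T)
        (C := ρ / (2 * (B * T + 1))) (f := fun s => (G (s, w₀, ε)).1 - (G (s, w₀, 0)).1)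
        (fun s hs => by
          rw [uIoc_of_le hT.le] at hs
          exact (norm_fst_le (G (s, w₀, ε) - G (s, w₀, 0))).trans
            (H₄ s ⟨hs.1.le, hs.2⟩ ε hεr₄.le))
      rw [sub_zero, abs_of_pos hT] at e2
      rw [e1, norm_neg]
      calc _ ≤ B * (ρ / (2 * (B * T + 1)) * T) :=
            (ContinuousLinearMap.le_opNorm _ _).trans (by gcongr)
        _ = (B * T) / (B * T + 1) * (ρ / 2) := by field_simp
        _ ≤ 1 * (ρ / 2) := by
            gcongr
            rw [div_le_one (by positivity)]
            linarith
        _ = ρ / 2 := one_mul _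
    · refine (ContinuousMap.norm_le _ (by positivity)).2 fun t => ?_
      have e1 : (Ψ (u₀, 0) - (u₀, 0)).2 t = (ε / η) • primitiveWithBoundary S T
          (fun s => G (s, w₀, ε)) t := by
        simp only [Ψ, hcurve0]
        simp
      rw [e1, norm_smul, norm_div, Real.norm_eq_abs, Real.norm_of_nonneg hη0.le]
      calc _ ≤ |ε| / η * ((‖S‖ + 1) * T * M₂) := by
            gcongr
            exact norm_primitiveWithBoundary_le S hT
              (fun s hs => H₃ s hs w₀ (Metric.mem_closedBall_self hr₃.le) ε (hεr.le.trans hr3)) t.2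
        _ = |ε| * (2 * ((‖S‖ + 1) * T * M₂)) / η * (1 / 2) := by ring
        _ ≤ ρ * (1 / 2) := by
            gcongr
            rw [div_le_iff₀ hη0, mul_comm ρ]
            exact hεb.le
        _ = ρ / 2 := by ring
  obtain ⟨z, hz, hfix⟩ := exists_fixedPoint_of_half_lipschitz Ψ (u₀, 0) hρ0.le hLip hinit
  have hcurve_eq : ∀ t ∈ Icc 0 T, curve z t =
      (z.1, 0) + ε • primitiveWithBoundary S T (fun s => G (s, curve z s, ε)) t := fun t ht => by
    have h1 : z.2 ⟨t, ht⟩ =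
        (ε / η) • primitiveWithBoundary S T (fun s => G (s, curve z s, ε)) t := by
      conv_lhs => rw [← hfix]
      rfl
    have h2 : curve z t = (z.1, 0) + η • z.2 ⟨t, ht⟩ := by
      simp only [curve]
      rw [IccExtend_of_mem _ _ ht]
    rw [h2, h1, smul_smul, mul_div_cancel₀ _ hη0.ne']
  have hzero : curve z 0 =
      (z.1, ε • S (∫ s in 0..T, (G (s, curve z s, ε)).2)) := by
    rw [hcurve_eq 0 ⟨le_rfl, hT.le⟩]
    simp [primitiveWithBoundary]
  refine ⟨curve z, hcurve z, fun t ht => ?_, ?_, ?_, ?_⟩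
  · rw [hcurve_eq t ht, hzero]
    simp [primitiveWithBoundary, smul_add, ← add_assoc]
  · have h1 : z.1 - J.symm (∫ s in 0..T, (G (s, curve z s, ε)).1) = z.1 := congrArg Prod.fst hfix
    have h2 : J.symm (∫ s in 0..T, (G (s, curve z s, ε)).1) = 0 := by
      simpa using h1
    simpa using h2
  · rw [hzero]
  · have := hball z hz 0
    rw [mem_closedBall_iff_norm] at this
    exact this.trans_lt hrδ

end Averaging

/-! ### Forced oscillators -/

section Oscillator

/-- Position at time `t` of the free oscillator `x'' + ω² x = 0` with initial data `u`. -/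
noncomputable def oscPos (ω t : ℝ) (u : ℝ × ℝ) : ℝ := cos (ω * t) * u.1 + sin (ω * t) / ω * u.2

/-- Velocity at time `t` of the free oscillator `x'' + ω² x = 0` with initial data `u`. -/
noncomputable def oscVel (ω t : ℝ) (u : ℝ × ℝ) : ℝ := -(ω * sin (ω * t)) * u.1 + cos (ω * t) * u.2

/-- The velocity kick `(0, h)` at time `t`, transported back to time `0` by the free flow. -/
noncomputable def impulse (ω t h : ℝ) : ℝ × ℝ := (-(sin (ω * t) / ω) * h, cos (ω * t) * h)

/-- Variation of constants. -/
lemma hasDerivAt_osc {ω : ℝ} (hω : ω ≠ 0) {u : ℝ → ℝ × ℝ} {t h : ℝ}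
    (hu : HasDerivAt u (impulse ω t h) t) :
    HasDerivAt (fun t => oscPos ω t (u t)) (oscVel ω t (u t)) t ∧
      HasDerivAt (fun t => oscVel ω t (u t)) (-(ω ^ 2 * oscPos ω t (u t)) + h) t := by
  have h1 : HasDerivAt (fun t => (u t).1) (-(sin (ω * t) / ω) * h) t := hu.fst
  have h2 : HasDerivAt (fun t => (u t).2) (cos (ω * t) * h) t := hu.snd
  have hl : HasDerivAt (fun t => ω * t) ω t := by simpa using (hasDerivAt_id t).const_mul ω
  have hs := hl.sin
  have hc := hl.cos
  have hsq := sin_sq_add_cos_sq (ω * t)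
  refine ⟨((hc.mul h1).add ((hs.div_const ω).mul h2)).congr_deriv ?_,
    ((((hs.const_mul ω).fun_neg).mul h1).add (hc.mul h2)).congr_deriv ?_⟩
  · unfold oscVel
    field_simp
    ring
  · unfold oscPos
    field_simp
    linear_combination h * hsq

/-- A forced oscillator with periodic forcing whose state returns after one period is periodic:
the difference with its translate is a free oscillation of zero energy. -/
lemma periodic_of_return {ω T : ℝ} (hω : ω ≠ 0) {X X' h : ℝ → ℝ}
    (hX : ∀ t, HasDerivAt X (X' t) t) (hX' : ∀ t, HasDerivAt X' (-(ω ^ 2 * X t) + h t) t)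
    (hh : Function.Periodic h T) (h0 : X T = X 0) (h0' : X' T = X' 0) :
    Function.Periodic X T ∧ Function.Periodic X' T := by
  have hd : ∀ t, HasDerivAt (fun t => X (t + T) - X t) (X' (t + T) - X' t) t := fun t =>
    ((hX (t + T)).comp_add_const t T).sub (hX t)
  have hd' : ∀ t, HasDerivAt (fun t => X' (t + T) - X' t) (-(ω ^ 2 * (X (t + T) - X t))) t :=
    fun t => (((hX' (t + T)).comp_add_const t T).sub (hX' t)).congr_deriv (by rw [hh t]; ring)
  have hE : ∀ t, HasDerivAt
      (fun t => (X' (t + T) - X' t) ^ 2 + ω ^ 2 * (X (t + T) - X t) ^ 2) 0 t := fun t =>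
    (((hd' t).pow 2).add (((hd t).pow 2).const_mul (ω ^ 2))).congr_deriv (by push_cast; ring)
  have hconst : ∀ t, (X' (t + T) - X' t) ^ 2 + ω ^ 2 * (X (t + T) - X t) ^ 2 = 0 := fun t => by
    have := is_const_of_deriv_eq_zero (fun t => (hE t).differentiableAt) (fun t => (hE t).deriv) t 0
    simpa [h0, h0'] using this
  have hω2 : 0 < ω ^ 2 := by positivity
  constructor
  · intro t
    have h1 : ω ^ 2 * (X (t + T) - X t) ^ 2 = 0 := by
      have := hconst t
      nlinarith [sq_nonneg (X' (t + T) - X' t), mul_nonneg hω2.le (sq_nonneg (X (t + T) - X t))]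
    have h2 : (X (t + T) - X t) ^ 2 = 0 := (mul_eq_zero.1 h1).resolve_left hω2.ne'
    exact sub_eq_zero.1 (pow_eq_zero_iff two_ne_zero |>.1 h2)
  · intro t
    have h1 : (X' (t + T) - X' t) ^ 2 = 0 := by
      have := hconst t
      nlinarith [sq_nonneg (X' (t + T) - X' t), mul_nonneg hω2.le (sq_nonneg (X (t + T) - X t))]
    exact sub_eq_zero.1 (pow_eq_zero_iff two_ne_zero |>.1 h1)

lemma exists_periodic_extension {E : Type*} [TopologicalSpace E] {T : ℝ} (hT : 0 < T) {ζ : ℝ → E}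
    (hζ : Continuous ζ) (h : ζ 0 = ζ T) :
    ∃ ζ' : ℝ → E, Continuous ζ' ∧ Function.Periodic ζ' T ∧ ∀ t ∈ Icc 0 T, ζ' t = ζ t := by
  have : Fact (0 < T) := ⟨hT⟩
  have hper : Function.Periodic (fun t : ℝ => AddCircle.liftIco T 0 ζ (t : AddCircle T)) T :=
    fun t => by simp
  have hIco : ∀ t ∈ Ico 0 T, AddCircle.liftIco T 0 ζ (t : AddCircle T) = ζ t := fun t ht =>
    AddCircle.liftIco_coe_apply (by simpa using ht)
  refine ⟨fun t => AddCircle.liftIco T 0 ζ (t : AddCircle T),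
    (AddCircle.liftIco_continuous (by simpa using h) hζ.continuousOn).comp
      (AddCircle.continuous_mk' T), hper, fun t ht => ?_⟩
  rcases ht.2.lt_or_eq with hlt | rfl
  · exact hIco t ⟨ht.1, hlt⟩
  · have := hper 0
    simp only [zero_add] at this
    simp only [this, ← h]
    exact hIco 0 ⟨le_rfl, hT⟩

/-- Away from resonance the free flow over time `θ` has no nonzero fixed point, so an
increment `c` over that time can be compensated by the choice of the initial data `S c`. -/
lemma exists_boundary_operator {θ : ℝ} (hθ : cos (2 * θ) ≠ 1) :
    ∃ S : ℝ × ℝ →L[ℝ] ℝ × ℝ, ∀ c,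
      (oscPos 2 θ (S c + c), oscVel 2 θ (S c + c)) = S c := by
  let f := ContinuousLinearMap.fst ℝ ℝ ℝ
  let g := ContinuousLinearMap.snd ℝ ℝ ℝ
  -- with `K` the flow map over time `θ`, this is `S = (1 - K)⁻¹ K`
  refine ⟨((-1 / 2 : ℝ) • f + (sin (2 * θ) / (4 * (1 - cos (2 * θ)))) • g).prod
    ((-(sin (2 * θ) / (1 - cos (2 * θ)))) • f + (-1 / 2 : ℝ) • g), fun c => ?_⟩
  have hne : 1 - cos (2 * θ) ≠ 0 := sub_ne_zero.2 hθ.symm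
  have hsq := sin_sq_add_cos_sq (2 * θ)
  ext
  · simp [oscPos, f, g]
    field_simp
    linear_combination (-8 * c.1) * hsq
  · simp [oscVel, f, g]
    field_simp
    linear_combination (-4 * c.2) * hsq

end Oscillator

/-! ### The coupled system in the rotating frame -/

section RotatingFrame

/-- The phase space of `((x, x'), (y, y'))`. -/
abbrev Phase : Type := (ℝ × ℝ) × (ℝ × ℝ)

/-- The free flow of the two oscillators, of frequencies `√3` and `2`. -/
noncomputable def freeFlow (t : ℝ) (w : Phase) : Phase :=
  ((oscPos (√3) t w.1, oscVel (√3) t w.1), (oscPos 2 t w.2, oscVel 2 t w.2))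

/-- The bracket multiplying `ε` in one equation of the system, as a function of
`(t, ((x, x'), (y, y')), ε)`. -/
def forcing (f g : ℝ × ℝ × ℝ → ℝ) (R : (ℝ × ℝ × ℝ × ℝ × ℝ) × ℝ → ℝ) (z : ℝ × Phase × ℝ) : ℝ :=
  f (z.1, z.2.1.1.2, z.2.1.2.2) * z.2.1.1.1 + g (z.1, z.2.1.1.2, z.2.1.2.2) * z.2.1.2.1 +
    z.2.2 * R ((z.1, z.2.1.1.1, z.2.1.1.2, z.2.1.2.1, z.2.1.2.2), z.2.2)

/-- The vector field in the rotating frame: with `w` defined by `(x, x', y, y') = freeFlow t w`,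
the system reads `w' = ε * rotatedField (t, w, ε)`. -/
noncomputable def rotatedField (F₁ F₂ : ℝ × Phase × ℝ → ℝ) (z : ℝ × Phase × ℝ) : Phase :=
  (impulse (√3) z.1 (F₁ (z.1, freeFlow z.1 z.2.1, z.2.2)),
    impulse 2 z.1 (F₂ (z.1, freeFlow z.1 z.2.1, z.2.2)))

lemma continuous_freeFlow {w : ℝ → Phase} (hw : Continuous w) :
    Continuous (fun t => freeFlow t (w t)) := by
  unfold freeFlow oscPos oscVel
  fun_prop

lemma contDiff_forcing {f g : ℝ × ℝ × ℝ → ℝ} {R : (ℝ × ℝ × ℝ × ℝ × ℝ) × ℝ → ℝ}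
    (hf : ContDiff ℝ 2 f) (hg : ContDiff ℝ 2 g) (hR : ContDiff ℝ 2 R) :
    ContDiff ℝ 1 (forcing f g R) := by
  have hf := hf.of_le (by norm_num : (1 : WithTop ℕ∞) ≤ 2)
  have hg := hg.of_le (by norm_num : (1 : WithTop ℕ∞) ≤ 2)
  have hR := hR.of_le (by norm_num : (1 : WithTop ℕ∞) ≤ 2)
  unfold forcing
  fun_prop

lemma contDiff_rotatedField {F₁ F₂ : ℝ × Phase × ℝ → ℝ} (h₁ : ContDiff ℝ 1 F₁)
    (h₂ : ContDiff ℝ 1 F₂) : ContDiff ℝ 1 (rotatedField F₁ F₂) := by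
  unfold rotatedField impulse freeFlow oscPos oscVel
  fun_prop

lemma forcing_periodic {f g : ℝ × ℝ × ℝ → ℝ} {R : (ℝ × ℝ × ℝ × ℝ × ℝ) × ℝ → ℝ} {T : ℝ} {q : ℕ}
    (hq : 0 < q) (hf : ∀ t u v : ℝ, f (t + T / q, u, v) = f (t, u, v))
    (hg : ∀ t u v : ℝ, g (t + T / q, u, v) = g (t, u, v))
    (hR : ∀ t a b c d e : ℝ, R ((t + T / q, a, b, c, d), e) = R ((t, a, b, c, d), e))
    (t : ℝ) (w : Phase) (e : ℝ) : forcing f g R (t + T, w, e) = forcing f g R (t, w, e) := by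
  have h : Function.Periodic (fun t => forcing f g R (t, w, e)) (T / q) := fun t => by
    simp only [forcing, hf, hg, hR]
  have hT := h.nat_mul q
  have hq' : (q : ℝ) ≠ 0 := by positivity
  rw [mul_div_cancel₀ _ hq'] at hT
  exact hT t

/-- A rotating-frame trajectory over `[0, T]` whose state returns under the free flow yields a
periodic solution on the whole line. -/
lemma exists_periodic_solution {F₁ F₂ : ℝ × Phase × ℝ → ℝ} (hF₁ : Continuous F₁)
    (hF₂ : Continuous F₂) {T ε : ℝ} (hT : 0 < T)
    (hF₁p : ∀ t w e, F₁ (t + T, w, e) = F₁ (t, w, e))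
    (hF₂p : ∀ t w e, F₂ (t + T, w, e) = F₂ (t, w, e))
    {w : ℝ → Phase} (hw : Continuous w)
    (hode : ∀ t ∈ Icc 0 T, w t = w 0 + ε • ∫ s in 0..t, rotatedField F₁ F₂ (s, w s, ε))
    (hret : freeFlow T (w T) = w 0) :
    ∃ x x' y y' : ℝ → ℝ, (∀ t, HasDerivAt x (x' t) t) ∧ (∀ t, HasDerivAt y (y' t) t) ∧
      (∀ t, HasDerivAt x' (-(3 * x t) + ε * F₁ (t, ((x t, x' t), (y t, y' t)), ε)) t) ∧
      (∀ t, HasDerivAt y' (-(4 * y t) + ε * F₂ (t, ((x t, x' t), (y t, y' t)), ε)) t) ∧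
      Function.Periodic x T ∧ Function.Periodic y T ∧
      ((x 0, x' 0), (y 0, y' 0)) = w 0 := by
  have hflow0 : ∀ v, freeFlow 0 v = v := fun v => by simp [freeFlow, oscPos, oscVel]
  have hmem0 : (0 : ℝ) ∈ Icc 0 T := ⟨le_rfl, hT.le⟩
  have hmemT : T ∈ Icc 0 T := ⟨hT.le, le_rfl⟩
  obtain ⟨ζ, hζc, hζp, hζ⟩ := exists_periodic_extension hT (continuous_freeFlow hw)
    (by rw [hflow0, hret])
  set g : ℝ → Phase := fun s => (impulse (√3) s (F₁ (s, ζ s, ε)), impulse 2 s (F₂ (s, ζ s, ε)))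
    with hg
  have hgc : Continuous g := by
    simp only [hg, impulse]
    fun_prop
  set W : ℝ → Phase := fun t => w 0 + ε • ∫ s in 0..t, g s with hW
  have hWd : ∀ t, HasDerivAt W (ε • g t) t := fun t =>
    ((hgc.integral_hasStrictDerivAt 0 t).hasDerivAt.const_smul ε).const_add _
  have hWw : ∀ t ∈ Icc 0 T, W t = w t := fun t ht => by
    rw [hode t ht]
    simp only [hW]
    congr 2
    refine intervalIntegral.integral_congr fun s hs => ?_
    rw [uIcc_of_le ht.1] at hs
    simp only [hg, rotatedField, hζ s ⟨hs.1, hs.2.trans ht.2⟩]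
  have h3 : √3 ≠ (0 : ℝ) := by positivity
  have hd₁ : ∀ t, HasDerivAt (fun t => (W t).1) (impulse (√3) t (ε * F₁ (t, ζ t, ε))) t := fun t =>
    HasDerivAt.congr_deriv (HasFDerivAt.hasDerivAt (hWd t).hasFDerivAt.fst) (by ext <;> simp [hg, impulse] <;> ring)
  have hd₂ : ∀ t, HasDerivAt (fun t => (W t).2) (impulse 2 t (ε * F₂ (t, ζ t, ε))) t := fun t =>
    HasDerivAt.congr_deriv (HasFDerivAt.hasDerivAt (hWd t).hasFDerivAt.snd) (by ext <;> simp [hg, impulse] <;> ring)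
  have hx := fun t => hasDerivAt_osc h3 (hd₁ t)
  have hy := fun t => hasDerivAt_osc two_ne_zero (hd₂ t)
  have hZ0 : freeFlow 0 (W 0) = w 0 := by rw [hflow0, hWw 0 hmem0]
  have hZT : freeFlow T (W T) = freeFlow 0 (W 0) := by rw [hZ0, hWw T hmemT, hret]
  obtain ⟨px, px'⟩ := periodic_of_return h3 (fun t => (hx t).1) (fun t => (hx t).2)
    (h := fun t => ε * F₁ (t, ζ t, ε)) (T := T) (fun t => by simp only [hF₁p, hζp t])
    (congrArg (fun v : Phase => v.1.1) hZT) (congrArg (fun v : Phase => v.1.2) hZT)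
  obtain ⟨py, py'⟩ := periodic_of_return two_ne_zero (fun t => (hy t).1) (fun t => (hy t).2)
    (h := fun t => ε * F₂ (t, ζ t, ε)) (T := T) (fun t => by simp only [hF₂p, hζp t])
    (congrArg (fun v : Phase => v.2.1) hZT) (congrArg (fun v : Phase => v.2.2) hZT)
  have hZζ : ∀ t, freeFlow t (W t) = ζ t := fun t => by
    have pZ : Function.Periodic (fun t => freeFlow t (W t)) T := fun t => by
      exact Prod.ext (Prod.ext (px t) (px' t)) (Prod.ext (py t) (py' t))
    have pd : Function.Periodic (fun t => (freeFlow t (W t), ζ t)) T := fun t =>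
      Prod.ext (pZ t) (hζp t)
    obtain ⟨s, hs, hst⟩ := pd.exists_mem_Ico₀ hT t
    have hs' : s ∈ Icc 0 T := ⟨hs.1, hs.2.le⟩
    rw [show freeFlow t (W t) = freeFlow s (W s) from congrArg Prod.fst hst,
      show ζ t = ζ s from congrArg Prod.snd hst, hζ s hs', hWw s hs']
  refine ⟨_, _, _, _, fun t => (hx t).1, fun t => (hy t).1, fun t => ?_, fun t => ?_, px, py, hZ0⟩
  · refine (hx t).2.congr_deriv ?_
    rw [← hZζ t, Real.sq_sqrt (by norm_num)]
    rfl
  · refine (hy t).2.congr_deriv ?_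
    rw [← hZζ t, show (2 : ℝ) ^ 2 = 4 by norm_num]
    rfl

lemma cos_ne_one_of_period {p : ℕ} (hp : 0 < p) : cos (2 * ((p : ℝ) * (2 * π / √3))) ≠ 1 := by
  intro h
  obtain ⟨n, hn⟩ := (cos_eq_one_iff _).1 h
  have h3 : √3 ≠ (0 : ℝ) := by positivity
  have hpi := pi_ne_zero
  have h1 : (n : ℝ) * √3 = 2 * p := by
    field_simp at hn
    exact hn
  have hirr : Irrational (√3) := by simpa using Nat.prime_three.irrational_sqrt
  have hn0 : n ≠ 0 := by
    rintro rfl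
    have : (0 : ℝ) < p := by exact_mod_cast hp
    simp at h1
    omega
  exact (hirr.intCast_mul hn0).ne_nat (2 * p) (by push_cast; exact h1)

end RotatingFrame

end Dumbbell

/-- Theorem 1 of the paper. Let `T₁ = 2π/√3` and let `p, q` be coprime positive
integers. Suppose the `C²` functions `f₁, f₂, f₃, f₄ : ℝ³ → ℝ` and
`R₁, R₂ : ℝ⁵ × ℝ → ℝ` are `pT₁/q`-periodic in their first argument, and that
`(X₀*, Y₀*) ≠ (0, 0)` is a simple zero of the averaged map
`𝓕(X₀,Y₀) = ( (1/(2pπ)) ∫₀^{pT₁} sin(√3 t) Δ₁(t) f₁(t, Δ₂(t), 0) dt,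
              (√3/(2pπ)) ∫₀^{pT₁} cos(√3 t) Δ₁(t) f₁(t, Δ₂(t), 0) dt )`,
where `Δ₁(t) = X₀ cos(√3 t) + (Y₀/√3) sin(√3 t)` and
`Δ₂(t) = Y₀ cos(√3 t) − √3 X₀ sin(√3 t)`. Then for `ε ≠ 0` small enough the
system `x'' + 3x = ε(f₁ x + f₂ y) + ε²R₁`, `y'' + 4y = ε(f₃ x + f₄ y) + ε²R₂`
has a `pT₁`-periodic solution with initial conditions tending to
`(X₀*, Y₀*, 0, 0)` as `ε → 0`. -/
theorem theorem1_dumbbell_T1_resonance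
    (p q : ℕ) (hp : 0 < p) (hq : 0 < q) (hpq : Nat.Coprime p q)
    (f₁ f₂ f₃ f₄ : ℝ × ℝ × ℝ → ℝ)
    (hf₁ : ContDiff ℝ 2 f₁) (hf₂ : ContDiff ℝ 2 f₂)
    (hf₃ : ContDiff ℝ 2 f₃) (hf₄ : ContDiff ℝ 2 f₄)
    (hf₁p : ∀ t u v : ℝ,
      f₁ (t + (p : ℝ) * (2 * π / Real.sqrt 3) / (q : ℝ), u, v) = f₁ (t, u, v))
    (hf₂p : ∀ t u v : ℝ,
      f₂ (t + (p : ℝ) * (2 * π / Real.sqrt 3) / (q : ℝ), u, v) = f₂ (t, u, v))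
    (hf₃p : ∀ t u v : ℝ,
      f₃ (t + (p : ℝ) * (2 * π / Real.sqrt 3) / (q : ℝ), u, v) = f₃ (t, u, v))
    (hf₄p : ∀ t u v : ℝ,
      f₄ (t + (p : ℝ) * (2 * π / Real.sqrt 3) / (q : ℝ), u, v) = f₄ (t, u, v))
    (R₁ R₂ : (ℝ × ℝ × ℝ × ℝ × ℝ) × ℝ → ℝ)
    (hR₁ : ContDiff ℝ 2 R₁) (hR₂ : ContDiff ℝ 2 R₂)
    (hR₁p : ∀ t a b c d e : ℝ,
      R₁ ((t + (p : ℝ) * (2 * π / Real.sqrt 3) / (q : ℝ), a, b, c, d), e) =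
        R₁ ((t, a, b, c, d), e))
    (hR₂p : ∀ t a b c d e : ℝ,
      R₂ ((t + (p : ℝ) * (2 * π / Real.sqrt 3) / (q : ℝ), a, b, c, d), e) =
        R₂ ((t, a, b, c, d), e))
    (𝓕 : ℝ × ℝ → ℝ × ℝ)
    (h𝓕 : ∀ X₀ Y₀ : ℝ, 𝓕 (X₀, Y₀) =
      (1 / (2 * (p : ℝ) * π) *
        ∫ t in (0 : ℝ)..((p : ℝ) * (2 * π / Real.sqrt 3)),
          Real.sin (Real.sqrt 3 * t) *
            (X₀ * Real.cos (Real.sqrt 3 * t) + Y₀ / Real.sqrt 3 * Real.sin (Real.sqrt 3 * t)) *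
            f₁ (t, Y₀ * Real.cos (Real.sqrt 3 * t) - Real.sqrt 3 * X₀ * Real.sin (Real.sqrt 3 * t), 0),
       Real.sqrt 3 / (2 * (p : ℝ) * π) *
        ∫ t in (0 : ℝ)..((p : ℝ) * (2 * π / Real.sqrt 3)),
          Real.cos (Real.sqrt 3 * t) *
            (X₀ * Real.cos (Real.sqrt 3 * t) + Y₀ / Real.sqrt 3 * Real.sin (Real.sqrt 3 * t)) *
            f₁ (t, Y₀ * Real.cos (Real.sqrt 3 * t) - Real.sqrt 3 * X₀ * Real.sin (Real.sqrt 3 * t), 0)))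
    (X₀' Y₀' : ℝ) (hne : (X₀', Y₀') ≠ (0, 0))
    (hzero : 𝓕 (X₀', Y₀') = 0)
    (hsimple : LinearMap.det (fderiv ℝ 𝓕 (X₀', Y₀')).toLinearMap ≠ 0) :
    ∀ δ : ℝ, 0 < δ → ∃ ε₀ : ℝ, 0 < ε₀ ∧ ∀ ε : ℝ, 0 < |ε| → |ε| < ε₀ →
      ∃ x y : ℝ → ℝ, ContDiff ℝ 2 x ∧ ContDiff ℝ 2 y ∧
        (∀ t : ℝ, deriv (deriv x) t + 3 * x t =
          ε * (f₁ (t, deriv x t, deriv y t) * x t + f₂ (t, deriv x t, deriv y t) * y t) +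
            ε ^ 2 * R₁ ((t, x t, deriv x t, y t, deriv y t), ε)) ∧
        (∀ t : ℝ, deriv (deriv y) t + 4 * y t =
          ε * (f₃ (t, deriv x t, deriv y t) * x t + f₄ (t, deriv x t, deriv y t) * y t) +
            ε ^ 2 * R₂ ((t, x t, deriv x t, y t, deriv y t), ε)) ∧
        Function.Periodic x ((p : ℝ) * (2 * π / Real.sqrt 3)) ∧
        Function.Periodic y ((p : ℝ) * (2 * π / Real.sqrt 3)) ∧
        dist (x 0, deriv x 0, y 0, deriv y 0) (X₀', Y₀', (0 : ℝ), (0 : ℝ)) < δ := by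
  intro δ hδ
  have h3 : √3 ≠ (0 : ℝ) := by positivity
  have hp' : (0 : ℝ) < p := by exact_mod_cast hp
  have hcos2 := Dumbbell.cos_ne_one_of_period hp
  have hperiod : √3 * ((p : ℝ) * (2 * π / √3)) = p * (2 * π) := by field_simp
  set T : ℝ := (p : ℝ) * (2 * π / √3) with hTdef
  have hT : 0 < T := by positivity
  have hF₁ := Dumbbell.contDiff_forcing hf₁ hf₂ hR₁
  have hF₂ := Dumbbell.contDiff_forcing hf₃ hf₄ hR₂
  set F₁ := Dumbbell.forcing f₁ f₂ R₁ with hF₁def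
  set F₂ := Dumbbell.forcing f₃ f₄ R₂ with hF₂def
  have hG := Dumbbell.contDiff_rotatedField hF₁ hF₂
  obtain ⟨S, hS⟩ := Dumbbell.exists_boundary_operator hcos2
  set m : ℝ := 2 * p * π / √3 with hm
  have hm0 : m ≠ 0 := by positivity
  -- the averaged map of the rotating-frame field is `diag (-m, m)` composed with `𝓕`
  let Λ : (ℝ × ℝ) ≃L[ℝ] (ℝ × ℝ) := (LinearEquiv.prodCongr
    (LinearEquiv.smulOfNeZero ℝ ℝ (-m) (neg_ne_zero.2 hm0))
    (LinearEquiv.smulOfNeZero ℝ ℝ m hm0)).toContinuousLinearEquiv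
  have havg : ∀ u : ℝ × ℝ,
      ∫ s in 0..T, (Dumbbell.rotatedField F₁ F₂ (s, (u, 0), 0)).1 = Λ (𝓕 u) := by
    rintro ⟨X, Y⟩
    have hc : Continuous fun s => (Dumbbell.rotatedField F₁ F₂ (s, ((X, Y), 0), 0)).1 :=
      (hG.continuous.comp (by fun_prop : Continuous fun s : ℝ =>
        ((s, ((X, Y), 0), 0) : ℝ × Dumbbell.Phase × ℝ))).fst
    have hΛ : Λ (𝓕 (X, Y)) = (-m * (𝓕 (X, Y)).1, m * (𝓕 (X, Y)).2) := rfl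
    rw [hΛ, h𝓕]
    refine Prod.ext ?_ ?_
    · refine ((ContinuousLinearMap.fst ℝ ℝ ℝ).intervalIntegral_comp_comm
        (hc.intervalIntegrable _ _)).symm.trans ?_
      have : -m * (1 / (2 * (p : ℝ) * π)) = -(1 / √3) := by
        rw [hm]; field_simp
      simp only
      rw [← mul_assoc, this, ← intervalIntegral.integral_const_mul]
      refine intervalIntegral.integral_congr fun s _ => ?_
      simp only [ContinuousLinearMap.coe_fst', Dumbbell.rotatedField, Dumbbell.impulse, hF₁def,
        Dumbbell.forcing, Dumbbell.freeFlow, Dumbbell.oscPos, Dumbbell.oscVel, Prod.fst_zero,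
        Prod.snd_zero, mul_zero, add_zero, zero_mul]
      rw [show -(√3 * sin (√3 * s)) * X + cos (√3 * s) * Y =
        Y * cos (√3 * s) - √3 * X * sin (√3 * s) by ring]
      ring
    · refine ((ContinuousLinearMap.snd ℝ ℝ ℝ).intervalIntegral_comp_comm
        (hc.intervalIntegrable _ _)).symm.trans ?_
      have : m * (√3 / (2 * (p : ℝ) * π)) = 1 := by
        rw [hm]; field_simp
      simp only
      rw [← mul_assoc, this, one_mul]
      refine intervalIntegral.integral_congr fun s _ => ?_
      simp only [ContinuousLinearMap.coe_snd', Dumbbell.rotatedField, Dumbbell.impulse, hF₁def,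
        Dumbbell.forcing, Dumbbell.freeFlow, Dumbbell.oscPos, Dumbbell.oscVel, Prod.fst_zero,
        Prod.snd_zero, mul_zero, add_zero, zero_mul]
      rw [show -(√3 * sin (√3 * s)) * X + cos (√3 * s) * Y =
        Y * cos (√3 * s) - √3 * X * sin (√3 * s) by ring]
      ring
  -- a map that is not differentiable has derivative `0` by convention, hence zero determinant
  have hdiff : DifferentiableAt ℝ 𝓕 (X₀', Y₀') := by
    by_contra hnd
    rw [fderiv_zero_of_not_differentiableAt hnd] at hsimple
    exact hsimple (by simp)
  let J : (ℝ × ℝ) ≃L[ℝ] (ℝ × ℝ) :=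
    ((fderiv ℝ 𝓕 (X₀', Y₀')).toContinuousLinearEquivOfDetNeZero hsimple).trans Λ
  have hJ : HasFDerivAt
      (fun u => ∫ s in 0..T, (Dumbbell.rotatedField F₁ F₂ (s, (u, 0), 0)).1)
      (J : ℝ × ℝ →L[ℝ] ℝ × ℝ) (X₀', Y₀') := by
    simp only [havg]
    exact Λ.hasFDerivAt.comp _ hdiff.hasFDerivAt
  obtain ⟨ε₀, hε₀, hsol⟩ := Dumbbell.exists_solution_of_nondegenerate_average hG hT S (X₀', Y₀') J
    (by rw [havg, hzero, map_zero]) hJ hδ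
  refine ⟨ε₀, hε₀, fun ε _ hε => ?_⟩
  obtain ⟨w, hwc, hode, hode₁, hw0, hwδ⟩ := hsol ε hε
  have hret : Dumbbell.freeFlow T (w T) = w 0 := by
    have hc : Continuous fun s => Dumbbell.rotatedField F₁ F₂ (s, w s, ε) := by
      have := hG.continuous
      fun_prop
    have hwT := hode T ⟨hT.le, le_rfl⟩
    have hfst : (w T).1 = (w 0).1 := by
      have h1 := (ContinuousLinearMap.fst ℝ (ℝ × ℝ) (ℝ × ℝ)).intervalIntegral_comp_comm
        (hc.intervalIntegrable (μ := MeasureTheory.volume) 0 T)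
      simp only [ContinuousLinearMap.coe_fst'] at h1
      rw [hwT, Prod.fst_add, Prod.smul_fst, ← h1, hode₁, smul_zero, add_zero]
    have hsnd : (w T).2 = S (ε • ∫ s in 0..T, (Dumbbell.rotatedField F₁ F₂ (s, w s, ε)).2) +
        ε • ∫ s in 0..T, (Dumbbell.rotatedField F₁ F₂ (s, w s, ε)).2 := by
      have h1 := (ContinuousLinearMap.snd ℝ (ℝ × ℝ) (ℝ × ℝ)).intervalIntegral_comp_comm
        (hc.intervalIntegrable (μ := MeasureTheory.volume) 0 T)
      simp only [ContinuousLinearMap.coe_snd'] at h1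
      rw [hwT, Prod.snd_add, Prod.smul_snd, ← h1, hw0, map_smul]
    refine Prod.ext ?_ ?_
    · have hs : sin (p * (2 * π)) = 0 := by
        have := sin_nat_mul_pi (p * 2)
        push_cast at this
        rwa [mul_assoc] at this
      simp [Dumbbell.freeFlow, Dumbbell.oscPos, Dumbbell.oscVel, hperiod, cos_nat_mul_two_pi, hs,
        hfst]
    · simp only [Dumbbell.freeFlow]
      rw [hsnd, hS, hw0, map_smul]
  obtain ⟨x, x', y, y', hx, hy, hx', hy', px, py, hinit⟩ :=
    Dumbbell.exists_periodic_solution hF₁.continuous hF₂.continuous hT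
      (Dumbbell.forcing_periodic hq hf₁p hf₂p hR₁p) (Dumbbell.forcing_periodic hq hf₃p hf₄p hR₂p)
      hwc hode hret
  have dx : deriv x = x' := funext fun t => (hx t).deriv
  have dy : deriv y = y' := funext fun t => (hy t).deriv
  have cx : Continuous x := continuous_iff_continuousAt.2 fun t => (hx t).continuousAt
  have cy : Continuous y := continuous_iff_continuousAt.2 fun t => (hy t).continuousAt
  have cx' : Continuous x' := continuous_iff_continuousAt.2 fun t => (hx' t).continuousAt
  have cy' : Continuous y' := continuous_iff_continuousAt.2 fun t => (hy' t).continuousAt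
  have hF₁c := hF₁.continuous
  have hF₂c := hF₂.continuous
  have smooth : ∀ {a a' b : ℝ → ℝ}, (∀ t, HasDerivAt a (a' t) t) → (∀ t, HasDerivAt a' (b t) t) →
      Continuous b → ContDiff ℝ 2 a := fun {a a' b} ha ha' hb => by
    have h1 : deriv a = a' := funext fun t => (ha t).deriv
    have h2 : deriv a' = b := funext fun t => (ha' t).deriv
    rw [show (2 : WithTop ℕ∞) = 1 + 1 by norm_num, contDiff_succ_iff_deriv, h1]
    refine ⟨fun t => (ha t).differentiableAt, by simp, contDiff_one_iff_deriv.2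
      ⟨fun t => (ha' t).differentiableAt, by rwa [h2]⟩⟩
  refine ⟨x, y, smooth hx hx' (by fun_prop), smooth hy hy' (by fun_prop), fun t => ?_, fun t => ?_,
    px, py, ?_⟩
  · rw [dx, dy, (hx' t).deriv]
    simp only [hF₁def, Dumbbell.forcing]
    ring
  · rw [dx, dy, (hy' t).deriv]
    simp only [hF₂def, Dumbbell.forcing]
    ring
  · rw [dx, dy]
    rw [← hinit, ← dist_eq_norm] at hwδ
    simp only [Prod.dist_eq, max_lt_iff, Prod.fst_zero, Prod.snd_zero] at hwδ ⊢
    tauto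
end

section
/- Let p and q be coprime positive integers and T₂ = π. Let f₁, f₂, f₃, f₄ : ℝ³ → ℝ be C² functions that are (pT₂/q)-periodic in their first argument, and let R₁, R₂ : ℝ⁵ × ℝ → ℝ be C² functions that are (pT₂/q)-periodic in their first argument. Consider the perturbed system x'' + 3x = ε(f₁(t,x',y')·x + f₂(t,x',y')·y) + ε²R₁(t,x,x',y,y',ε), y'' + 4y = ε(f₃(t,x',y')·x + f₄(t,x',y')·y) + ε²R₂(t,x,x',y,y',ε). Suppose (Z₀*, W₀*) ≠ (0,0) is a simple zero of the map (𝓖₁, 𝓖₂). Then for every δ > 0 there exists ε₀ > 0 such that for every real ε with 0 < |ε| < ε₀ the system has a pT₂-periodic solution (x, y) : ℝ → ℝ² whose initial data (x(0), x'(0), y(0), y'(0)) lies within distance δ of (0, 0, Z₀*, W₀*). -/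
/-!
The resonant oscillator `y'' + 4y` has only `pπ`-periodic motions, while `x'' + 3x` has none
except rest, because `√3` is irrational. In amplitude coordinates `((a, b), (Z, W))`, transported
by the free flow, the system becomes `ξ' = ε g(t, ξ, ε)`. Being `pπ`-periodic means two things:
the non-resonant amplitudes satisfy `ξ₁(0) = ε B ∫ g₁` for a fixed matrix `B` (`returnOp`), and
the resonant ones satisfy `∫ g₂ = 0`. At `ε = 0` the solution `ξ` is constant and the second
equation is `𝓖 = 0` up to an invertible diagonal factor.

These conditions, together with the integral form of the differential equation, are written as
one equation `Ψ(ε, ξ) = 0` in the Banach space `C([0, T], ℝ² × ℝ²)`. The superposition operator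
`ξ ↦ g(·, ξ(·), ε)` is strictly differentiable (`hasStrictFDerivAt_superposition`), and
`∂Ψ/∂ξ` at `ε = 0` is invertible exactly because `D𝓖` is, so the implicit function theorem yields
a branch of solutions (`exists_boundary_solution`). No differentiable dependence of flows on
initial data is needed.

A solution on `[0, T]` whose end states agree extends periodically. Inserting the extension into
the forcing terms gives two forced scalar oscillators that return to their initial states after
one period of the forcing; conservation of energy for the difference with the translate shows
that they are periodic (`forced_periodic`), hence coincide with the extension and solve the
system on all of `ℝ` (`exists_periodic_solution`).
-/

open Real

/-! ### Calculus in spaces of continuous functions -/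

section FunctionSpace

open Set Topology Filter

/-- The multiplication operator `η ↦ (s ↦ Φ s (η s))` on continuous functions. -/
noncomputable def mulOp {I A B : Type*} [TopologicalSpace I] [CompactSpace I]
    [NormedAddCommGroup A] [NormedSpace ℝ A] [NormedAddCommGroup B] [NormedSpace ℝ B]
    (Φ : C(I, A →L[ℝ] B)) : C(I, A) →L[ℝ] C(I, B) :=
  LinearMap.mkContinuous
    { toFun := fun η => ⟨fun s => Φ s (η s), by fun_prop⟩
      map_add' := by intro η θ; ext s; simp
      map_smul' := by intro r η; ext s; simp } ‖Φ‖ (by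
    intro η
    refine (ContinuousMap.norm_le _ (by positivity)).2 fun s => ?_
    exact (ContinuousLinearMap.le_opNorm _ _).trans
      (mul_le_mul (Φ.norm_coe_le_norm s) (η.norm_coe_le_norm s) (norm_nonneg _) (norm_nonneg Φ)))

@[simp] lemma mulOp_apply {I A B : Type*} [TopologicalSpace I] [CompactSpace I]
    [NormedAddCommGroup A] [NormedSpace ℝ A] [NormedAddCommGroup B] [NormedSpace ℝ B]
    (Φ : C(I, A →L[ℝ] B)) (η : C(I, A)) (s : I) : mulOp Φ η s = Φ s (η s) := rfl

/-- The superposition operator `η ↦ φ ∘ η` of a `C¹` map is strictly differentiable in the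
uniform norm: on the compact image of `η₀` the derivative `φ'` is uniformly continuous, so the
mean value inequality applies uniformly in the point. -/
lemma hasStrictFDerivAt_superposition {I A B : Type*} [TopologicalSpace I] [CompactSpace I]
    [NormedAddCommGroup A] [NormedSpace ℝ A] [NormedAddCommGroup B] [NormedSpace ℝ B]
    (φ : C(A, B)) (hφ : ContDiff ℝ 1 φ) (η₀ : C(I, A)) :
    HasStrictFDerivAt (fun η : C(I, A) => φ.comp η)
      (mulOp ⟨fun s => fderiv ℝ φ (η₀ s),
        (hφ.continuous_fderiv one_ne_zero).comp η₀.continuous⟩) η₀ := by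
  rw [hasStrictFDerivAt_iff_isLittleO, Asymptotics.isLittleO_iff]
  intro c hc
  have hU := (isCompact_range η₀.continuous).uniformContinuousAt_of_continuousAt (fderiv ℝ φ)
    (fun a _ => (hφ.continuous_fderiv one_ne_zero).continuousAt) (Metric.dist_mem_uniformity hc)
  obtain ⟨r, hr, hrU⟩ := Metric.mem_uniformity_dist.1 hU
  have hball : ∀ᶠ p : C(I, A) × C(I, A) in 𝓝 (η₀, η₀),
      p ∈ Metric.ball η₀ r ×ˢ Metric.ball η₀ r :=
    prod_mem_nhds (Metric.ball_mem_nhds _ hr) (Metric.ball_mem_nhds _ hr)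
  filter_upwards [hball] with p hp
  refine (ContinuousMap.norm_le _ (by positivity)).2 fun s => ?_
  have hin : ∀ η ∈ Metric.ball η₀ r, η s ∈ Metric.ball (η₀ s) r := fun η hη =>
    lt_of_le_of_lt (ContinuousMap.dist_apply_le_dist s) hη
  have key := (convex_ball (η₀ s) r).norm_image_sub_le_of_norm_fderiv_le' (𝕜 := ℝ) (f := φ)
    (φ := fderiv ℝ φ (η₀ s)) (C := c)
    (fun x _ => (hφ.differentiable one_ne_zero) x)
    (fun x hx => by
      have := hrU (a := η₀ s) (b := x) (by simpa [dist_comm] using hx) ⟨s, rfl⟩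
      rw [← dist_eq_norm, dist_comm]
      exact this.le) (hin _ hp.2) (hin _ hp.1)
  refine key.trans (mul_le_mul_of_nonneg_left ?_ hc.le)
  exact (p.1 - p.2).norm_coe_le_norm s

/-- The Volterra operator `η ↦ (t ↦ ∫₀ᵗ η)` on `C([0, T], E)`; the integrand is the extension of
`η` to `ℝ` by constants. -/
noncomputable def volterra {E : Type*} [NormedAddCommGroup E] [NormedSpace ℝ E]
    {T : ℝ} (hT : 0 ≤ T) : C(Icc 0 T, E) →L[ℝ] C(Icc 0 T, E) :=
  LinearMap.mkContinuous
    { toFun := fun η => ⟨fun t => ∫ s in (0 : ℝ)..t, η (projIcc 0 T hT s),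
        (intervalIntegral.continuous_primitive
          (fun a b => (by fun_prop : Continuous fun s => η (projIcc 0 T hT s)).intervalIntegrable
            a b) 0).comp continuous_subtype_val⟩
      map_add' := by
        intro η θ
        ext t
        exact intervalIntegral.integral_add
          ((by fun_prop : Continuous fun s => η (projIcc 0 T hT s)).intervalIntegrable _ _)
          ((by fun_prop : Continuous fun s => θ (projIcc 0 T hT s)).intervalIntegrable _ _)
      map_smul' := by
        intro r η
        ext t
        exact intervalIntegral.integral_smul _ _ } T (by
    intro η
    refine (ContinuousMap.norm_le _ (by positivity)).2 fun t => ?_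
    refine (intervalIntegral.norm_integral_le_of_norm_le_const (C := ‖η‖)
      fun s _ => η.norm_coe_le_norm _).trans ?_
    rw [sub_zero, abs_of_nonneg t.2.1, mul_comm]
    exact mul_le_mul_of_nonneg_right t.2.2 (norm_nonneg _))

lemma volterra_apply {E : Type*} [NormedAddCommGroup E] [NormedSpace ℝ E]
    {T : ℝ} (hT : 0 ≤ T) (η : C(Icc 0 T, E)) (t : Icc 0 T) :
    volterra hT η t = ∫ s in (0 : ℝ)..t, η (projIcc 0 T hT s) := rfl

/-- Constant functions, as a bounded operator into `C(I, E)`. -/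
noncomputable def constOp (I E : Type*) [TopologicalSpace I] [CompactSpace I]
    [NormedAddCommGroup E] [NormedSpace ℝ E] : E →L[ℝ] C(I, E) :=
  LinearMap.mkContinuous
    { toFun := fun c => ContinuousMap.const I c
      map_add' := by intro a b; ext s; simp
      map_smul' := by intro r a; ext s; simp } 1 (by
    intro c
    rw [one_mul]
    exact (ContinuousMap.norm_le _ (norm_nonneg _)).2 fun s => le_rfl)

@[simp] lemma constOp_apply (I E : Type*) [TopologicalSpace I] [CompactSpace I]
    [NormedAddCommGroup E] [NormedSpace ℝ E] (c : E) (s : I) : constOp I E c s = c := rfl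

/-- The linear part of `(ε, ξ) ↦ (s ↦ (s, ξ s, ε))`. -/
noncomputable def graphOp (I E : Type*) [TopologicalSpace I] [CompactSpace I]
    [NormedAddCommGroup E] [NormedSpace ℝ E] : ℝ × C(I, E) →L[ℝ] C(I, ℝ × E × ℝ) :=
  LinearMap.mkContinuous
    { toFun := fun p => ⟨fun s => (0, p.2 s, p.1), by fun_prop⟩
      map_add' := by intro a b; ext s <;> simp
      map_smul' := by intro r a; ext s <;> simp } 1 (by
    intro p
    rw [one_mul]
    refine (ContinuousMap.norm_le _ (norm_nonneg _)).2 fun s => ?_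
    simp only [LinearMap.coe_mk, AddHom.coe_mk, ContinuousMap.coe_mk, Prod.norm_def, norm_zero]
    have := p.2.norm_coe_le_norm s
    exact max_le (by positivity) (max_le (this.trans (le_max_right _ _)) (le_max_left _ _)))

@[simp] lemma graphOp_apply (I E : Type*) [TopologicalSpace I] [CompactSpace I]
    [NormedAddCommGroup E] [NormedSpace ℝ E] (p : ℝ × C(I, E)) (s : I) :
    graphOp I E p s = (0, p.2 s, p.1) := rfl

/-- Lyapunov–Schmidt reduction for `ξ' = ε g(t, ξ, ε)` on `[0, T]`. The unknown splits as
`E₁ × E₂`; the boundary condition on `E₁` is solvable for the initial value (through `B`), while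
on `E₂` it reads `∫ g₂ = 0`, which at `ε = 0` is an equation for the constant `c` having an
invertible derivative. The implicit function theorem in `C([0, T], E₁ × E₂)` gives solutions for
small `ε`. -/
theorem exists_boundary_solution {E₁ E₂ : Type*}
    [NormedAddCommGroup E₁] [NormedSpace ℝ E₁] [CompleteSpace E₁]
    [NormedAddCommGroup E₂] [NormedSpace ℝ E₂] [CompleteSpace E₂]
    {T : ℝ} (hT : 0 ≤ T) (g : ℝ × (E₁ × E₂) × ℝ → E₁ × E₂) (hg : ContDiff ℝ 1 g)
    (B : E₁ →L[ℝ] E₁) (c : E₂) (M : E₂ ≃L[ℝ] E₂)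
    (h0 : (∫ s in (0 : ℝ)..T, g (s, (0, c), 0)).2 = 0)
    (hM : HasFDerivAt (fun c : E₂ => (∫ s in (0 : ℝ)..T, g (s, (0, c), 0)).2)
      (M : E₂ →L[ℝ] E₂) c) :
    ∀ δ > 0, ∃ ε₀ > 0, ∀ ε : ℝ, |ε| < ε₀ → ∃ ξ : ℝ → E₁ × E₂, Continuous ξ ∧
      (∀ t ∈ Icc 0 T, ξ t = ξ 0 + ε • ∫ s in (0 : ℝ)..t, g (s, ξ s, ε)) ∧
      (ξ 0).1 = ε • B (∫ s in (0 : ℝ)..T, g (s, ξ s, ε)).1 ∧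
      (∫ s in (0 : ℝ)..T, g (s, ξ s, ε)).2 = 0 ∧ ‖ξ 0 - (0, c)‖ < δ := by
  intro δ hδ
  set I := Icc (0 : ℝ) T
  let t₀ : I := ⟨0, le_rfl, hT⟩
  let t₁ : I := ⟨T, hT, le_rfl⟩
  let X := C(I, E₁ × E₂)
  let gc : C(ℝ × (E₁ × E₂) × ℝ, E₁ × E₂) := ⟨g, hg.continuous⟩
  let base : C(I, ℝ × (E₁ × E₂) × ℝ) := ⟨fun s => (s, 0, 0), by fun_prop⟩
  let N : ℝ × X → X := fun p => gc.comp (base + graphOp I (E₁ × E₂) p)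
  have N_apply : ∀ p s, N p s = g (s, p.2 s, p.1) := by
    intro p s
    change g ((s : ℝ) + 0, 0 + p.2 s, 0 + p.1) = _
    simp
  let K : X →L[ℝ] E₁ × E₂ := (ContinuousMap.evalCLM ℝ t₁).comp (volterra hT)
  let ι : E₂ →L[ℝ] X := (constOp I (E₁ × E₂)).comp (ContinuousLinearMap.inr ℝ E₁ E₂)
  let ev : X →L[ℝ] E₂ :=
    (ContinuousLinearMap.snd ℝ E₁ E₂).comp (ContinuousMap.evalCLM ℝ t₀)
  let K₂ : X →L[ℝ] E₂ := (ContinuousLinearMap.snd ℝ E₁ E₂).comp K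
  let H : X →L[ℝ] X := ((constOp I (E₁ × E₂)).comp ((ContinuousLinearMap.inl ℝ E₁ E₂).comp
    (B.comp ((ContinuousLinearMap.fst ℝ E₁ E₂).comp K)))) + volterra hT
  let ξ₀ : X := ι c
  obtain ⟨D, hD⟩ : ∃ D : ℝ × X →L[ℝ] X, HasStrictFDerivAt N D (0, ξ₀) :=
    ⟨_, (hasStrictFDerivAt_superposition gc hg (base + graphOp I (E₁ × E₂) (0, ξ₀))).comp
      ((0 : ℝ), ξ₀) ((graphOp I (E₁ × E₂)).hasStrictFDerivAt.const_add base)⟩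
  let A : X →L[ℝ] E₂ := K₂.comp (D.comp (ContinuousLinearMap.inr ℝ ℝ X))
  -- integrals over `[0, T]` do not see the extension by constants
  have int_eq : ∀ (p : ℝ × X) (t : I), volterra hT (N p) t =
      ∫ s in (0 : ℝ)..t, g (s, p.2 (projIcc 0 T hT s), p.1) := by
    intro p t
    rw [volterra_apply]
    refine intervalIntegral.integral_congr fun s hs => ?_
    rw [uIcc_of_le t.2.1] at hs
    have hs' : s ∈ Icc 0 T := ⟨hs.1, hs.2.trans t.2.2⟩
    simp only [N_apply, projIcc_of_mem hT hs']
  have hAM : A.comp ι = (M : E₂ →L[ℝ] E₂) := by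
    have h1 : HasFDerivAt (fun c : E₂ => K₂ (N (0, ι c))) (A.comp ι) c := by
      have h2 : HasFDerivAt (fun c : E₂ => ((0 : ℝ), ι c))
          ((ContinuousLinearMap.inr ℝ ℝ X).comp ι) c :=
        ((ContinuousLinearMap.inr ℝ ℝ X).comp ι).hasFDerivAt
      exact K₂.hasFDerivAt.comp c (hD.hasFDerivAt.comp c h2)
    refine h1.unique (hM.congr_of_eventuallyEq (Eventually.of_forall fun c => ?_))
    change (volterra hT (N (0, ι c)) t₁).2 = _
    rw [int_eq]
    rfl
  -- Evaluating `Ψ = 0` at time `0` separates its parts: the `E₂` component there is `∫ g₂ = 0`,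
  -- since `ev` cancels the initial value and the Volterra term vanishes.
  let Ψ : ℝ × X → X := fun p => p.2 - ι (ev p.2) + ι (K₂ (N p)) - p.1 • H (N p)
  let Ψ' : ℝ × X →L[ℝ] X :=
    ContinuousLinearMap.snd ℝ ℝ X - (ι.comp ev).comp (ContinuousLinearMap.snd ℝ ℝ X)
      + (ι.comp K₂).comp D
      - ((0 : ℝ) • H.comp D + (ContinuousLinearMap.fst ℝ ℝ X).smulRight (H (N (0, ξ₀))))
  have hΨ : HasStrictFDerivAt Ψ Ψ' (0, ξ₀) := by
    refine ((hasStrictFDerivAt_snd.sub ?_).add ?_).sub ?_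
    · exact ((ι.comp ev).comp (ContinuousLinearMap.snd ℝ ℝ X)).hasStrictFDerivAt
    · exact (ι.comp K₂).hasStrictFDerivAt.comp _ hD
    · exact hasStrictFDerivAt_fst.smul (H.hasStrictFDerivAt.comp _ hD)
  have evι : ∀ z, ev (ι z) = z := fun z => rfl
  have hAι : ∀ z, A (ι z) = M z := fun z => congrArg (fun L : E₂ →L[ℝ] E₂ => L z) hAM
  have hpart : ∀ u, (Ψ'.comp (ContinuousLinearMap.inr ℝ ℝ X)) u = u - ι (ev u) + ι (A u) := by
    intro u
    simp [Ψ', A]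
  have hinv : (Ψ'.comp (ContinuousLinearMap.inr ℝ ℝ X)).IsInvertible := by
    -- `u - ι (ev u) + ι (A u) = w` is solved by `u = w + ι z` with `M z = ev w - A w`.
    refine ⟨ContinuousLinearEquiv.equivOfInverse (Ψ'.comp (ContinuousLinearMap.inr ℝ ℝ X))
      (ContinuousLinearMap.id ℝ X + ι.comp ((M.symm : E₂ →L[ℝ] E₂).comp (ev - A))) ?_ ?_, rfl⟩
    · intro u
      rw [hpart]
      simp [evι, hAι]
      abel
    · intro u
      rw [hpart]
      simp [evι, hAι]
  have hΨ0 : Ψ (0, ξ₀) = 0 := by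
    have : K₂ (N (0, ξ₀)) = 0 := by
      change (volterra hT (N (0, ι c)) t₁).2 = _
      rw [int_eq]
      exact h0
    simp [Ψ, this, ξ₀, evι]
  have hev := hΨ.eventually_apply_implicitFunctionOfProdDomain hinv
  have hlim := hΨ.tendsto_implicitFunctionOfProdDomain hinv
  have hclose := hlim.eventually (Metric.ball_mem_nhds _ hδ)
  obtain ⟨ε₀, hε₀, hball⟩ := Metric.eventually_nhds_iff.1 (hev.and hclose)
  refine ⟨ε₀, hε₀, fun ε hε => ?_⟩
  obtain ⟨hsol, hnear⟩ := hball (y := ε) (by simpa using hε)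
  set ζ : X := hΨ.implicitFunctionOfProdDomain hinv ε
  rw [hΨ0] at hsol
  have hpt : ∀ t : I, ζ t - (0, (ζ t₀).2) + (0, (volterra hT (N (ε, ζ)) t₁).2)
      - ε • (((B (volterra hT (N (ε, ζ)) t₁).1, 0) : E₁ × E₂) + volterra hT (N (ε, ζ)) t) = 0 :=
    fun t => congrArg (fun η : X => η t) hsol
  simp only [int_eq] at hpt
  set ξ : ℝ → E₁ × E₂ := fun s => ζ (projIcc 0 T hT s) with hξ
  have hξt : ∀ t : I, ξ t = ζ t := fun t => by simp [hξ]
  have hξ0 : ξ 0 = ζ t₀ := hξt t₀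
  set J : E₁ × E₂ := ∫ s in (0 : ℝ)..T, g (s, ξ s, ε) with hJ
  have hpt0 := hpt t₀
  change ζ t₀ - (0, (ζ t₀).2) + (0, J.2) - ε • (((B J.1, 0) : E₁ × E₂) +
    ∫ s in (0 : ℝ)..0, g (s, ξ s, ε)) = 0 at hpt0
  rw [intervalIntegral.integral_same, add_zero, Prod.ext_iff] at hpt0
  obtain ⟨ha, hb⟩ := hpt0
  have hb' : J.2 = 0 := by simpa using hb
  have ha' : (ζ t₀).1 = ε • B J.1 := by simpa [sub_eq_zero] using ha
  refine ⟨ξ, by fun_prop, ?_, hξ0 ▸ ha', hb', ?_⟩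
  · intro t ht
    have h := hpt ⟨t, ht⟩
    change ζ ⟨t, ht⟩ - (0, (ζ t₀).2) + (0, J.2) - ε • (((B J.1, 0) : E₁ × E₂) +
      ∫ s in (0 : ℝ)..t, g (s, ξ s, ε)) = 0 at h
    rw [← hξt ⟨t, ht⟩, hb', Prod.mk_zero_zero, add_zero, sub_sub, sub_eq_zero] at h
    rw [h, hξ0, smul_add, ← add_assoc]
    congr 1
    ext
    · simp [ha']
    · simp
  · rw [hξ0]
    have : dist (ζ t₀) (ξ₀ t₀) < δ := lt_of_le_of_lt (ContinuousMap.dist_apply_le_dist t₀) hnear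
    rw [dist_eq_norm] at this
    exact this

end FunctionSpace

/-! ### Forced oscillators and periodic extension -/

section Oscillator

open Set

/-- Position at time `t` of the oscillator `x'' + μ² x = 0` started at `x = a`, `x' = b`. -/
noncomputable def oscPos (μ t a b : ℝ) : ℝ := a * cos (μ * t) + b / μ * sin (μ * t)

/-- Velocity at time `t` of the oscillator `x'' + μ² x = 0` started at `x = a`, `x' = b`. -/
noncomputable def oscVel (μ t a b : ℝ) : ℝ := b * cos (μ * t) - a * μ * sin (μ * t)

/-- Position of the forced oscillator `x'' + μ² x = ε h`, by variation of constants. -/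
noncomputable def forcedPos (μ ε a b : ℝ) (h : ℝ → ℝ) (t : ℝ) : ℝ :=
  oscPos μ t (a + ε * ∫ s in (0 : ℝ)..t, -(sin (μ * s) / μ) * h s)
    (b + ε * ∫ s in (0 : ℝ)..t, cos (μ * s) * h s)

/-- Velocity of the forced oscillator `x'' + μ² x = ε h`, by variation of constants. -/
noncomputable def forcedVel (μ ε a b : ℝ) (h : ℝ → ℝ) (t : ℝ) : ℝ :=
  oscVel μ t (a + ε * ∫ s in (0 : ℝ)..t, -(sin (μ * s) / μ) * h s)
    (b + ε * ∫ s in (0 : ℝ)..t, cos (μ * s) * h s)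

lemma hasDerivAt_forced_amplitudes (μ ε a b : ℝ) {h : ℝ → ℝ} (hh : Continuous h) (t : ℝ) :
    HasDerivAt (fun t => a + ε * ∫ s in (0 : ℝ)..t, -(sin (μ * s) / μ) * h s)
      (ε * (-(sin (μ * t) / μ) * h t)) t ∧
    HasDerivAt (fun t => b + ε * ∫ s in (0 : ℝ)..t, cos (μ * s) * h s)
      (ε * (cos (μ * t) * h t)) t := by
  constructor
  · have hc : Continuous fun s => -(sin (μ * s) / μ) * h s := by fun_prop
    exact ((hc.integral_hasStrictDerivAt 0 t).hasDerivAt.const_mul ε).const_add a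
  · have hc : Continuous fun s => cos (μ * s) * h s := by fun_prop
    exact ((hc.integral_hasStrictDerivAt 0 t).hasDerivAt.const_mul ε).const_add b

lemma hasDerivAt_cos_sin_mul (μ t : ℝ) :
    HasDerivAt (fun t => cos (μ * t)) (-sin (μ * t) * μ) t ∧
    HasDerivAt (fun t => sin (μ * t)) (cos (μ * t) * μ) t := by
  have hl : HasDerivAt (fun t => μ * t) μ t := by simpa using (hasDerivAt_id t).const_mul μ
  exact ⟨hl.cos, hl.sin⟩

lemma hasDerivAt_forcedPos {μ : ℝ} (hμ : μ ≠ 0) (ε a b : ℝ) {h : ℝ → ℝ} (hh : Continuous h)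
    (t : ℝ) : HasDerivAt (forcedPos μ ε a b h) (forcedVel μ ε a b h t) t := by
  obtain ⟨hA, hB⟩ := hasDerivAt_forced_amplitudes μ ε a b hh t
  obtain ⟨hc, hs⟩ := hasDerivAt_cos_sin_mul μ t
  refine HasDerivAt.congr_deriv ((hA.mul hc).add ((hB.div_const μ).mul hs)) ?_
  unfold forcedVel oscVel
  field_simp
  ring

lemma hasDerivAt_forcedVel {μ : ℝ} (hμ : μ ≠ 0) (ε a b : ℝ) {h : ℝ → ℝ} (hh : Continuous h)
    (t : ℝ) : HasDerivAt (forcedVel μ ε a b h) (-μ ^ 2 * forcedPos μ ε a b h t + ε * h t) t := by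
  obtain ⟨hA, hB⟩ := hasDerivAt_forced_amplitudes μ ε a b hh t
  obtain ⟨hc, hs⟩ := hasDerivAt_cos_sin_mul μ t
  refine HasDerivAt.congr_deriv ((hB.mul hc).sub ((hA.mul_const μ).mul hs)) ?_
  unfold forcedPos oscPos
  have h1 := sin_sq_add_cos_sq (μ * t)
  field_simp
  linear_combination (ε * h t) * h1

lemma forced_zero (μ ε a b : ℝ) (h : ℝ → ℝ) :
    forcedPos μ ε a b h 0 = a ∧ forcedVel μ ε a b h 0 = b := by
  simp [forcedPos, forcedVel, oscPos, oscVel]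

/-- Under periodic forcing, a solution returning to its initial state after one period is
periodic: the difference with its translate solves the free equation with zero data, and the
energy of the latter is conserved. -/
lemma forced_periodic {μ : ℝ} (hμ : μ ≠ 0) {ε a b T : ℝ} {h : ℝ → ℝ} (hh : Continuous h)
    (hper : Function.Periodic h T)
    (hX : forcedPos μ ε a b h T = a) (hV : forcedVel μ ε a b h T = b) :
    Function.Periodic (forcedPos μ ε a b h) T ∧ Function.Periodic (forcedVel μ ε a b h) T := by
  set X := forcedPos μ ε a b h with hXdef
  set V := forcedVel μ ε a b h with hVdef
  have dX : ∀ t, HasDerivAt X (V t) t := hasDerivAt_forcedPos hμ ε a b hh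
  have dV : ∀ t, HasDerivAt V (-μ ^ 2 * X t + ε * h t) t := hasDerivAt_forcedVel hμ ε a b hh
  have dX' : ∀ t, HasDerivAt (fun t => X (t + T) - X t) (V (t + T) - V t) t := fun t =>
    ((dX (t + T)).comp_add_const t T).sub (dX t)
  have dV' : ∀ t, HasDerivAt (fun t => V (t + T) - V t) (-μ ^ 2 * (X (t + T) - X t)) t := by
    intro t
    refine HasDerivAt.congr_deriv (((dV (t + T)).comp_add_const t T).sub (dV t)) ?_
    rw [hper t]
    ring
  have dE : ∀ t, HasDerivAt
      (fun t => μ ^ 2 * (X (t + T) - X t) ^ 2 + (V (t + T) - V t) ^ 2) 0 t := by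
    intro t
    refine HasDerivAt.congr_deriv ((((dX' t).pow 2).const_mul (μ ^ 2)).add ((dV' t).pow 2)) ?_
    simp
    ring
  have hE : ∀ t, μ ^ 2 * (X (t + T) - X t) ^ 2 + (V (t + T) - V t) ^ 2 = 0 := by
    intro t
    have := is_const_of_deriv_eq_zero (fun t => (dE t).differentiableAt)
      (fun t => (dE t).deriv) t 0
    simp only [zero_add] at this
    rw [this, hX, hV, show X 0 = a from (forced_zero μ ε a b h).1,
      show V 0 = b from (forced_zero μ ε a b h).2]
    ring
  have hμ2 : 0 < μ ^ 2 := by positivity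
  constructor
  · intro t
    have h1 : (X (t + T) - X t) ^ 2 = 0 := by
      nlinarith [hE t, sq_nonneg (V (t + T) - V t), sq_nonneg (X (t + T) - X t)]
    exact sub_eq_zero.1 (pow_eq_zero_iff two_ne_zero |>.1 h1)
  · intro t
    have h1 : (V (t + T) - V t) ^ 2 = 0 := by
      nlinarith [hE t, sq_nonneg (V (t + T) - V t),
        mul_nonneg hμ2.le (sq_nonneg (X (t + T) - X t))]
    exact sub_eq_zero.1 (pow_eq_zero_iff two_ne_zero |>.1 h1)

lemma contDiff_two_of_hasDerivAt {x v w : ℝ → ℝ} (hx : ∀ t, HasDerivAt x (v t) t)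
    (hv : ∀ t, HasDerivAt v (w t) t) (hw : Continuous w) : ContDiff ℝ 2 x := by
  have hdx : deriv x = v := funext fun t => (hx t).deriv
  have hdv : deriv v = w := funext fun t => (hv t).deriv
  rw [show (2 : WithTop ℕ∞) = 1 + 1 by norm_num, contDiff_succ_iff_deriv]
  refine ⟨fun t => (hx t).differentiableAt, by simp, ?_⟩
  rw [hdx, contDiff_one_iff_deriv, hdv]
  exact ⟨fun t => (hv t).differentiableAt, hw⟩

lemma exists_periodic_extension {E : Type*} [TopologicalSpace E] {T : ℝ} (hT : 0 < T)
    {v : ℝ → E} (hv : Continuous v) (h : v 0 = v T) :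
    ∃ u : ℝ → E, Continuous u ∧ Function.Periodic u T ∧ ∀ t ∈ Icc 0 T, u t = v t := by
  have : Fact (0 < T) := ⟨hT⟩
  have hper : Function.Periodic (fun t : ℝ => AddCircle.liftIco T 0 v (t : AddCircle T)) T := by
    intro t
    simp
  have hIco : ∀ t ∈ Ico 0 T, AddCircle.liftIco T 0 v (t : AddCircle T) = v t := fun t ht =>
    AddCircle.liftIco_coe_apply (by simpa using ht)
  refine ⟨fun t => AddCircle.liftIco T 0 v (t : AddCircle T),
    (AddCircle.liftIco_zero_continuous h hv.continuousOn).comp (AddCircle.continuous_mk' T),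
    hper, fun t ht => ?_⟩
  rcases ht.2.lt_or_eq with h' | rfl
  · exact hIco t ⟨ht.1, h'⟩
  · have := hper 0
    simp only [zero_add] at this
    exact this.trans ((hIco 0 ⟨le_rfl, hT⟩).trans h)

lemma intervalIntegral_pair {E F : Type*} [NormedAddCommGroup E] [NormedSpace ℝ E]
    [CompleteSpace E] [NormedAddCommGroup F] [NormedSpace ℝ F] [CompleteSpace F]
    {f : ℝ → E} {g : ℝ → F} (hf : Continuous f) (hg : Continuous g) (a b : ℝ) :
    (∫ s in a..b, (f s, g s)) = (∫ s in a..b, f s, ∫ s in a..b, g s) := by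
  have hi : IntervalIntegrable (fun s => (f s, g s)) MeasureTheory.volume a b :=
    (hf.prodMk hg).intervalIntegrable a b
  ext
  · exact ((ContinuousLinearMap.fst ℝ E F).intervalIntegral_comp_comm hi).symm
  · exact ((ContinuousLinearMap.snd ℝ E F).intervalIntegral_comp_comm hi).symm

end Oscillator

/-! ### Coupled oscillators at resonance -/

section Resonance

open Set

/-- Solves `free flow over [0, T] applied to ((a, b) + ε (u, v)) = (a, b)` for `(a, b) / ε` when
`cos (ω T) ≠ 1`; in the complex coordinate `a + i b / ω` it is multiplication by
`1 / (exp (i ω T) - 1) = -1/2 - i k` with `k = cot (ω T / 2) / 2`. -/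
noncomputable def returnOp (ω T : ℝ) : ℝ × ℝ →L[ℝ] ℝ × ℝ :=
  ((-1 / 2 : ℝ) • ContinuousLinearMap.fst ℝ ℝ ℝ +
      (sin (ω * T) / (2 * (1 - cos (ω * T))) / ω) • ContinuousLinearMap.snd ℝ ℝ ℝ).prod
    ((-1 / 2 : ℝ) • ContinuousLinearMap.snd ℝ ℝ ℝ -
      (sin (ω * T) / (2 * (1 - cos (ω * T))) * ω) • ContinuousLinearMap.fst ℝ ℝ ℝ)

lemma returnOp_spec {ω T : ℝ} (hω : ω ≠ 0) (hcos : cos (ω * T) ≠ 1) (ε a b : ℝ) (J : ℝ × ℝ)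
    (h : (a, b) = ε • returnOp ω T J) :
    oscPos ω T (a + ε * J.1) (b + ε * J.2) = a ∧ oscVel ω T (a + ε * J.1) (b + ε * J.2) = b := by
  obtain ⟨u, v⟩ := J
  simp only [returnOp, ContinuousLinearMap.prod_apply, add_apply, sub_apply, smul_apply, ContinuousLinearMap.coe_fst',
    ContinuousLinearMap.coe_snd', smul_eq_mul, Prod.smul_mk, Prod.mk.injEq] at h
  obtain ⟨rfl, rfl⟩ := h
  have h1 := sin_sq_add_cos_sq (ω * T)
  have h2 : 1 - cos (ω * T) ≠ 0 := sub_ne_zero.2 (Ne.symm hcos)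
  unfold oscPos oscVel
  generalize sin (ω * T) = S at *
  generalize cos (ω * T) = C at *
  have hS : S ^ 2 = 1 - C ^ 2 := by linarith
  constructor
  · field_simp
    ring_nf
    simp only [hS]
    ring
  · field_simp
    ring_nf
    simp only [hS]
    ring

/-- Vector field of the system in the amplitude variables `((a, b), (Z, W))`, in which the
unperturbed flow is stationary. -/
noncomputable def ampField (ω μ : ℝ) (F₁ F₂ : (ℝ × ℝ × ℝ × ℝ × ℝ) × ℝ → ℝ)
    (P : ℝ × ((ℝ × ℝ) × (ℝ × ℝ)) × ℝ) : (ℝ × ℝ) × (ℝ × ℝ) :=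
  ((-(sin (ω * P.1) / ω) * F₁ ((P.1, oscPos ω P.1 P.2.1.1.1 P.2.1.1.2,
        oscVel ω P.1 P.2.1.1.1 P.2.1.1.2, oscPos μ P.1 P.2.1.2.1 P.2.1.2.2,
        oscVel μ P.1 P.2.1.2.1 P.2.1.2.2), P.2.2),
    cos (ω * P.1) * F₁ ((P.1, oscPos ω P.1 P.2.1.1.1 P.2.1.1.2,
        oscVel ω P.1 P.2.1.1.1 P.2.1.1.2, oscPos μ P.1 P.2.1.2.1 P.2.1.2.2,
        oscVel μ P.1 P.2.1.2.1 P.2.1.2.2), P.2.2)),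
   (-(sin (μ * P.1) / μ) * F₂ ((P.1, oscPos ω P.1 P.2.1.1.1 P.2.1.1.2,
        oscVel ω P.1 P.2.1.1.1 P.2.1.1.2, oscPos μ P.1 P.2.1.2.1 P.2.1.2.2,
        oscVel μ P.1 P.2.1.2.1 P.2.1.2.2), P.2.2),
    cos (μ * P.1) * F₂ ((P.1, oscPos ω P.1 P.2.1.1.1 P.2.1.1.2,
        oscVel ω P.1 P.2.1.1.1 P.2.1.1.2, oscPos μ P.1 P.2.1.2.1 P.2.1.2.2,
        oscVel μ P.1 P.2.1.2.1 P.2.1.2.2), P.2.2)))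

lemma contDiff_ampField (ω μ : ℝ) {F₁ F₂ : (ℝ × ℝ × ℝ × ℝ × ℝ) × ℝ → ℝ}
    (hF₁ : ContDiff ℝ 1 F₁) (hF₂ : ContDiff ℝ 1 F₂) : ContDiff ℝ 1 (ampField ω μ F₁ F₂) := by
  unfold ampField oscPos oscVel
  fun_prop

/-- Periodic solutions of two weakly coupled oscillators, the first non-resonant
(`cos (ω T) ≠ 1`), the second resonant (`cos (μ T) = 1`, `sin (μ T) = 0`), near a nondegenerate
zero of the averaged forcing of the second. -/
theorem exists_periodic_solution {ω μ T : ℝ} (hω : ω ≠ 0) (hμ : μ ≠ 0) (hT : 0 < T)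
    (hcosω : cos (ω * T) ≠ 1) (hcosμ : cos (μ * T) = 1) (hsinμ : sin (μ * T) = 0)
    {F₁ F₂ : (ℝ × ℝ × ℝ × ℝ × ℝ) × ℝ → ℝ} (hF₁ : ContDiff ℝ 1 F₁) (hF₂ : ContDiff ℝ 1 F₂)
    (hF₁p : ∀ t w e, F₁ ((t + T, w), e) = F₁ ((t, w), e))
    (hF₂p : ∀ t w e, F₂ ((t + T, w), e) = F₂ ((t, w), e))
    (Γ : ℝ × ℝ → ℝ × ℝ)
    (hΓ : ∀ Z W, Γ (Z, W) =
      (∫ s in (0 : ℝ)..T, -(sin (μ * s) / μ) * F₂ ((s, 0, 0, oscPos μ s Z W, oscVel μ s Z W), 0),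
       ∫ s in (0 : ℝ)..T, cos (μ * s) * F₂ ((s, 0, 0, oscPos μ s Z W, oscVel μ s Z W), 0)))
    (c : ℝ × ℝ) (M : (ℝ × ℝ) ≃L[ℝ] ℝ × ℝ) (h0 : Γ c = 0)
    (hM : HasFDerivAt Γ (M : ℝ × ℝ →L[ℝ] ℝ × ℝ) c) :
    ∀ δ > 0, ∃ ε₀ > 0, ∀ ε : ℝ, |ε| < ε₀ → ∃ x x' y y' : ℝ → ℝ,
      (∀ t, HasDerivAt x (x' t) t) ∧ (∀ t, HasDerivAt y (y' t) t) ∧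
      (∀ t, HasDerivAt x' (-ω ^ 2 * x t + ε * F₁ ((t, x t, x' t, y t, y' t), ε)) t) ∧
      (∀ t, HasDerivAt y' (-μ ^ 2 * y t + ε * F₂ ((t, x t, x' t, y t, y' t), ε)) t) ∧
      Function.Periodic x T ∧ Function.Periodic y T ∧
      dist (x 0, x' 0, y 0, y' 0) ((0 : ℝ), (0 : ℝ), c.1, c.2) < δ := by
  intro δ hδ
  have hg := contDiff_ampField ω μ hF₁ hF₂
  have hΓ' : ∀ c, (∫ s in (0 : ℝ)..T, ampField ω μ F₁ F₂ (s, (0, c), 0)).2 = Γ c := by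
    rintro ⟨Z, W⟩
    have hc := hF₂.continuous
    have hi : IntervalIntegrable (fun s => ampField ω μ F₁ F₂ (s, (0, (Z, W)), 0))
        MeasureTheory.volume 0 T :=
      Continuous.intervalIntegrable (by have := hg.continuous; fun_prop) _ _
    rw [hΓ, ← intervalIntegral_pair (by unfold oscPos oscVel; fun_prop)
      (by unfold oscPos oscVel; fun_prop)]
    refine ((ContinuousLinearMap.snd ℝ (ℝ × ℝ) (ℝ × ℝ)).intervalIntegral_comp_comm hi).symm.trans
      (intervalIntegral.integral_congr fun s _ => ?_)
    simp [ampField, show oscPos ω s 0 0 = 0 by simp [oscPos],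
      show oscVel ω s 0 0 = 0 by simp [oscVel]]
  obtain ⟨ε₀, hε₀, hsol⟩ := exists_boundary_solution hT.le (ampField ω μ F₁ F₂) hg
    (returnOp ω T) c M (by rw [hΓ', h0])
    (by simpa only [hΓ'] using hM) δ hδ
  refine ⟨ε₀, hε₀, fun ε hε => ?_⟩
  obtain ⟨ξ, hξc, hξ, hbd₁, hbd₂, hnear⟩ := hsol ε hε
  -- physical variables along the amplitude curve
  set v : ℝ → ℝ × ℝ × ℝ × ℝ := fun s => (oscPos ω s (ξ s).1.1 (ξ s).1.2,
    oscVel ω s (ξ s).1.1 (ξ s).1.2, oscPos μ s (ξ s).2.1 (ξ s).2.2,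
    oscVel μ s (ξ s).2.1 (ξ s).2.2) with hv
  have hvc : Continuous v := by
    rw [hv]; unfold oscPos oscVel; fun_prop
  have hv0 : v 0 = ((ξ 0).1.1, (ξ 0).1.2, (ξ 0).2.1, (ξ 0).2.2) := by
    simp [hv, oscPos, oscVel]
  have hvT : v 0 = v T := by
    have hT' := hξ T ⟨hT.le, le_rfl⟩
    set J := ∫ s in (0 : ℝ)..T, ampField ω μ F₁ F₂ (s, ξ s, ε)
    have e1 : (ξ T).1.1 = (ξ 0).1.1 + ε * J.1.1 := by rw [hT']; rfl
    have e2 : (ξ T).1.2 = (ξ 0).1.2 + ε * J.1.2 := by rw [hT']; rfl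
    have e3 : (ξ T).2 = (ξ 0).2 := by rw [hT']; simp [hbd₂]
    obtain ⟨r1, r2⟩ := returnOp_spec hω hcosω ε (ξ 0).1.1 (ξ 0).1.2 J.1 hbd₁
    rw [hv0]
    simp only [hv, e1, e2, e3, r1, r2]
    simp [oscPos, oscVel, hcosμ, hsinμ]
  obtain ⟨u, huc, hup, huv⟩ := exists_periodic_extension hT hvc hvT
  set h₁ : ℝ → ℝ := fun s => F₁ ((s, u s), ε) with hh₁
  set h₂ : ℝ → ℝ := fun s => F₂ ((s, u s), ε) with hh₂
  have h₁c : Continuous h₁ := by have := hF₁.continuous; fun_prop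
  have h₂c : Continuous h₂ := by have := hF₂.continuous; fun_prop
  have h₁p : Function.Periodic h₁ T := fun s => by simp only [hh₁, hup s, hF₁p]
  have h₂p : Function.Periodic h₂ T := fun s => by simp only [hh₂, hup s, hF₂p]
  set x := forcedPos ω ε (ξ 0).1.1 (ξ 0).1.2 h₁ with hx
  set x' := forcedVel ω ε (ξ 0).1.1 (ξ 0).1.2 h₁ with hx'
  set y := forcedPos μ ε (ξ 0).2.1 (ξ 0).2.2 h₂ with hy
  set y' := forcedVel μ ε (ξ 0).2.1 (ξ 0).2.2 h₂ with hy'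
  have hIcc : ∀ t ∈ Icc 0 T, (x t, x' t, y t, y' t) = v t := by
    intro t ht
    have hint : (∫ s in (0 : ℝ)..t, ampField ω μ F₁ F₂ (s, ξ s, ε)) =
        ((∫ s in (0 : ℝ)..t, -(sin (ω * s) / ω) * h₁ s, ∫ s in (0 : ℝ)..t, cos (ω * s) * h₁ s),
         (∫ s in (0 : ℝ)..t, -(sin (μ * s) / μ) * h₂ s,
          ∫ s in (0 : ℝ)..t, cos (μ * s) * h₂ s)) := by
      rw [← intervalIntegral_pair (by fun_prop) (by fun_prop),
        ← intervalIntegral_pair (by fun_prop) (by fun_prop),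
        ← intervalIntegral_pair (by fun_prop) (by fun_prop)]
      refine intervalIntegral.integral_congr fun s hs => ?_
      rw [uIcc_of_le ht.1] at hs
      simp only [hh₁, hh₂, huv s ⟨hs.1, hs.2.trans ht.2⟩]
      rfl
    have ht' := hξ t ht
    rw [hint] at ht'
    simp only [hv]
    rw [ht']
    rfl
  have hxT : ∀ t ∈ Icc 0 T, x t = (v t).1 ∧ x' t = (v t).2.1 ∧ y t = (v t).2.2.1 ∧
      y' t = (v t).2.2.2 := fun t ht => by
    rw [← hIcc t ht]
    exact ⟨rfl, rfl, rfl, rfl⟩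
  obtain ⟨k1, k2, k3, k4⟩ := hxT T ⟨hT.le, le_rfl⟩
  rw [← hvT, hv0] at k1 k2 k3 k4
  obtain ⟨px, px'⟩ : Function.Periodic x T ∧ Function.Periodic x' T :=
    forced_periodic hω h₁c h₁p k1 k2
  obtain ⟨py, py'⟩ : Function.Periodic y T ∧ Function.Periodic y' T :=
    forced_periodic hμ h₂c h₂p k3 k4
  have hu : ∀ t, u t = (x t, x' t, y t, y' t) := by
    intro t
    have hper : Function.Periodic (fun t => (u t, x t, x' t, y t, y' t)) T := fun t => by
      simp only [hup t, px t, px' t, py t, py' t]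
    obtain ⟨s, hs, hst⟩ := hper.exists_mem_Ico₀ hT t
    have hs' : s ∈ Icc 0 T := ⟨hs.1, hs.2.le⟩
    simp only [Prod.mk.injEq] at hst
    obtain ⟨q0, q1, q2, q3, q4⟩ := hst
    rw [q0, q1, q2, q3, q4, huv s hs', hIcc s hs']
  refine ⟨x, x', y, y', hasDerivAt_forcedPos hω _ _ _ h₁c, hasDerivAt_forcedPos hμ _ _ _ h₂c,
    fun t => ?_, fun t => ?_, px, py, ?_⟩
  · rw [← hu t]
    exact hasDerivAt_forcedVel hω _ _ _ h₁c t
  · rw [← hu t]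
    exact hasDerivAt_forcedVel hμ _ _ _ h₂c t
  · rw [hIcc 0 ⟨le_rfl, hT.le⟩, hv0]
    rw [← dist_eq_norm] at hnear
    refine lt_of_le_of_lt (le_of_eq ?_) hnear
    simp [Prod.dist_eq, Prod.norm_def, max_assoc]

lemma cos_sqrt_three_mul_ne_one {p : ℕ} (hp : 0 < p) : cos (√3 * (p * π)) ≠ 1 := by
  intro h
  obtain ⟨n, hn⟩ := (cos_eq_one_iff _).1 h
  have hp' : (p : ℝ) ≠ 0 := by positivity
  have h3 : Irrational (√3) := by
    simpa using Nat.Prime.irrational_sqrt (by norm_num : Nat.Prime 3)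
  refine h3 ⟨(2 * n / p : ℚ), ?_⟩
  push_cast
  rw [div_eq_iff hp']
  have := pi_ne_zero
  apply mul_right_cancel₀ this
  linarith

lemma apply_add_mul_of_periodic {α : Type*} {f : ℝ → α} {p q : ℕ} (hq : 0 < q)
    (h : ∀ t, f (t + (p : ℝ) * π / (q : ℝ)) = f t) (t : ℝ) : f (t + p * π) = f t := by
  have hper : Function.Periodic f ((p : ℝ) * π / q) := h
  have := hper.nat_mul q t
  rwa [mul_div_cancel₀ _ (by positivity : (q : ℝ) ≠ 0)] at this

end Resonance

/-- Theorem 2 of the paper. Let `T₂ = π` and let `p, q` be coprime positive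
integers. Suppose the `C²` functions `f₁, f₂, f₃, f₄ : ℝ³ → ℝ` and
`R₁, R₂ : ℝ⁵ × ℝ → ℝ` are `pT₂/q`-periodic in their first argument, and that
`(Z₀*, W₀*) ≠ (0, 0)` is a simple zero of the averaged map
`𝓖(Z₀,W₀) = ( (1/(pπ)) ∫₀^{pT₂} sin(2t) Δ₃(t) f₄(t, 0, Δ₄(t)) dt,
              (2/(pπ)) ∫₀^{pT₂} cos(2t) Δ₃(t) f₄(t, 0, Δ₄(t)) dt )`,
where `Δ₃(t) = Z₀ cos(2t) + (W₀/2) sin(2t)` and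
`Δ₄(t) = W₀ cos(2t) − 2Z₀ sin(2t)`. Then for `ε ≠ 0` small enough the system
`x'' + 3x = ε(f₁ x + f₂ y) + ε²R₁`, `y'' + 4y = ε(f₃ x + f₄ y) + ε²R₂`
has a `pT₂`-periodic solution with initial conditions tending to
`(0, 0, Z₀*, W₀*)` as `ε → 0`. -/
theorem theorem2_dumbbell_T2_resonance
    (p q : ℕ) (hp : 0 < p) (hq : 0 < q) (hpq : Nat.Coprime p q)
    (f₁ f₂ f₃ f₄ : ℝ × ℝ × ℝ → ℝ)
    (hf₁ : ContDiff ℝ 2 f₁) (hf₂ : ContDiff ℝ 2 f₂)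
    (hf₃ : ContDiff ℝ 2 f₃) (hf₄ : ContDiff ℝ 2 f₄)
    (hf₁p : ∀ t u v : ℝ, f₁ (t + (p : ℝ) * π / (q : ℝ), u, v) = f₁ (t, u, v))
    (hf₂p : ∀ t u v : ℝ, f₂ (t + (p : ℝ) * π / (q : ℝ), u, v) = f₂ (t, u, v))
    (hf₃p : ∀ t u v : ℝ, f₃ (t + (p : ℝ) * π / (q : ℝ), u, v) = f₃ (t, u, v))
    (hf₄p : ∀ t u v : ℝ, f₄ (t + (p : ℝ) * π / (q : ℝ), u, v) = f₄ (t, u, v))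
    (R₁ R₂ : (ℝ × ℝ × ℝ × ℝ × ℝ) × ℝ → ℝ)
    (hR₁ : ContDiff ℝ 2 R₁) (hR₂ : ContDiff ℝ 2 R₂)
    (hR₁p : ∀ t a b c d e : ℝ,
      R₁ ((t + (p : ℝ) * π / (q : ℝ), a, b, c, d), e) = R₁ ((t, a, b, c, d), e))
    (hR₂p : ∀ t a b c d e : ℝ,
      R₂ ((t + (p : ℝ) * π / (q : ℝ), a, b, c, d), e) = R₂ ((t, a, b, c, d), e))
    (𝓖 : ℝ × ℝ → ℝ × ℝ)
    (h𝓖 : ∀ Z₀ W₀ : ℝ, 𝓖 (Z₀, W₀) =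
      (1 / ((p : ℝ) * π) *
        ∫ t in (0 : ℝ)..((p : ℝ) * π),
          Real.sin (2 * t) * (Z₀ * Real.cos (2 * t) + W₀ / 2 * Real.sin (2 * t)) *
            f₄ (t, 0, W₀ * Real.cos (2 * t) - 2 * Z₀ * Real.sin (2 * t)),
       2 / ((p : ℝ) * π) *
        ∫ t in (0 : ℝ)..((p : ℝ) * π),
          Real.cos (2 * t) * (Z₀ * Real.cos (2 * t) + W₀ / 2 * Real.sin (2 * t)) *
            f₄ (t, 0, W₀ * Real.cos (2 * t) - 2 * Z₀ * Real.sin (2 * t))))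
    (Z₀' W₀' : ℝ) (hne : (Z₀', W₀') ≠ (0, 0))
    (hzero : 𝓖 (Z₀', W₀') = 0)
    (hsimple : LinearMap.det (fderiv ℝ 𝓖 (Z₀', W₀')).toLinearMap ≠ 0) :
    ∀ δ : ℝ, 0 < δ → ∃ ε₀ : ℝ, 0 < ε₀ ∧ ∀ ε : ℝ, 0 < |ε| → |ε| < ε₀ →
      ∃ x y : ℝ → ℝ, ContDiff ℝ 2 x ∧ ContDiff ℝ 2 y ∧
        (∀ t : ℝ, deriv (deriv x) t + 3 * x t =
          ε * (f₁ (t, deriv x t, deriv y t) * x t + f₂ (t, deriv x t, deriv y t) * y t) +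
            ε ^ 2 * R₁ ((t, x t, deriv x t, y t, deriv y t), ε)) ∧
        (∀ t : ℝ, deriv (deriv y) t + 4 * y t =
          ε * (f₃ (t, deriv x t, deriv y t) * x t + f₄ (t, deriv x t, deriv y t) * y t) +
            ε ^ 2 * R₂ ((t, x t, deriv x t, y t, deriv y t), ε)) ∧
        Function.Periodic x ((p : ℝ) * π) ∧
        Function.Periodic y ((p : ℝ) * π) ∧
        dist (x 0, deriv x 0, y 0, deriv y 0) ((0 : ℝ), (0 : ℝ), Z₀', W₀') < δ := by
  intro δ hδ
  have hT : (0 : ℝ) < p * π := by positivity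
  have h3 : (√3) ^ 2 = 3 := by norm_num
  have hcos2 : cos (2 * (p * π)) = 1 := by
    rw [show (2 : ℝ) * (p * π) = p * (2 * π) by ring]
    exact cos_nat_mul_two_pi p
  have hsin2 : sin (2 * (p * π)) = 0 := by
    rw [show (2 : ℝ) * (p * π) = ((2 * p : ℕ) : ℝ) * π by push_cast; ring]
    exact sin_nat_mul_pi _
  let F₁ : (ℝ × ℝ × ℝ × ℝ × ℝ) × ℝ → ℝ := fun P =>
    f₁ (P.1.1, P.1.2.2.1, P.1.2.2.2.2) * P.1.2.1 +
      f₂ (P.1.1, P.1.2.2.1, P.1.2.2.2.2) * P.1.2.2.2.1 + P.2 * R₁ P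
  let F₂ : (ℝ × ℝ × ℝ × ℝ × ℝ) × ℝ → ℝ := fun P =>
    f₃ (P.1.1, P.1.2.2.1, P.1.2.2.2.2) * P.1.2.1 +
      f₄ (P.1.1, P.1.2.2.1, P.1.2.2.2.2) * P.1.2.2.2.1 + P.2 * R₂ P
  have hF₁ : ContDiff ℝ 2 F₁ := by fun_prop
  have hF₂ : ContDiff ℝ 2 F₂ := by fun_prop
  have hF₁p : ∀ t w e, F₁ ((t + p * π, w), e) = F₁ ((t, w), e) := by
    rintro t ⟨a, b, c, d⟩ e
    simp only [F₁, apply_add_mul_of_periodic (f := fun t => f₁ (t, b, d)) hq (hf₁p · b d) t,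
      apply_add_mul_of_periodic (f := fun t => f₂ (t, b, d)) hq (hf₂p · b d) t,
      apply_add_mul_of_periodic (f := fun t => R₁ ((t, a, b, c, d), e)) hq
        (hR₁p · a b c d e) t]
  have hF₂p : ∀ t w e, F₂ ((t + p * π, w), e) = F₂ ((t, w), e) := by
    rintro t ⟨a, b, c, d⟩ e
    simp only [F₂, apply_add_mul_of_periodic (f := fun t => f₃ (t, b, d)) hq (hf₃p · b d) t,
      apply_add_mul_of_periodic (f := fun t => f₄ (t, b, d)) hq (hf₄p · b d) t,
      apply_add_mul_of_periodic (f := fun t => R₂ ((t, a, b, c, d), e)) hq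
        (hR₂p · a b c d e) t]
  -- The averaged amplitude field is `𝓖` up to an invertible diagonal factor.
  let L : (ℝ × ℝ) ≃L[ℝ] ℝ × ℝ :=
    (fderiv ℝ 𝓖 (Z₀', W₀')).toContinuousLinearEquivOfDetNeZero hsimple
  let S : (ℝ × ℝ) ≃L[ℝ] ℝ × ℝ := ContinuousLinearEquiv.prodCongr
    (ContinuousLinearEquiv.unitsEquivAut ℝ
      (Units.mk0 (-(p * π / 2)) (by simp [hp.ne', pi_ne_zero])))
    (ContinuousLinearEquiv.unitsEquivAut ℝ
      (Units.mk0 (p * π / 2) (by simp [hp.ne', pi_ne_zero])))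
  have hS : ∀ a b, S (a, b) = (a * -(p * π / 2), b * (p * π / 2)) := fun a b => rfl
  have hdiff : DifferentiableAt ℝ 𝓖 (Z₀', W₀') := by
    by_contra hnd
    rw [fderiv_zero_of_not_differentiableAt hnd] at hsimple
    exact hsimple (by simp)
  have hder : HasFDerivAt 𝓖 (L : ℝ × ℝ →L[ℝ] ℝ × ℝ) (Z₀', W₀') := hdiff.hasFDerivAt
  have hΓ : ∀ Z W, S (𝓖 (Z, W)) =
      (∫ s in (0 : ℝ)..p * π, -(sin (2 * s) / 2) *
          F₂ ((s, 0, 0, oscPos 2 s Z W, oscVel 2 s Z W), 0),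
       ∫ s in (0 : ℝ)..p * π, cos (2 * s) *
          F₂ ((s, 0, 0, oscPos 2 s Z W, oscVel 2 s Z W), 0)) := by
    intro Z W
    rw [h𝓖, hS]
    have hT' := hT.ne'
    ext
    · simp only
      rw [← intervalIntegral.integral_const_mul, ← intervalIntegral.integral_mul_const]
      refine intervalIntegral.integral_congr fun s _ => ?_
      simp only [F₂, oscPos, oscVel, mul_comm Z 2, mul_comm (2 * Z)]
      field_simp
      ring
    · simp only
      rw [← intervalIntegral.integral_const_mul, ← intervalIntegral.integral_mul_const]
      refine intervalIntegral.integral_congr fun s _ => ?_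
      simp only [F₂, oscPos, oscVel, mul_comm Z 2]
      field_simp
      ring
  obtain ⟨ε₀, hε₀, hsol⟩ := exists_periodic_solution (ω := √3) (μ := 2) (T := p * π)
    (by positivity) two_ne_zero hT (cos_sqrt_three_mul_ne_one hp) hcos2 hsin2
    (hF₁.of_le one_le_two) (hF₂.of_le one_le_two) hF₁p hF₂p (fun c => S (𝓖 c)) hΓ (Z₀', W₀')
    (L.trans S) (by simp [hzero])
    ((S : ℝ × ℝ →L[ℝ] ℝ × ℝ).hasFDerivAt.comp (Z₀', W₀') hder) δ hδ
  refine ⟨ε₀, hε₀, fun ε _ hε => ?_⟩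
  obtain ⟨x, x', y, y', dx, dy, dx', dy', px, py, hd⟩ := hsol ε hε
  have ex : deriv x = x' := funext fun t => (dx t).deriv
  have ey : deriv y = y' := funext fun t => (dy t).deriv
  have cx : Continuous x := continuous_iff_continuousAt.2 fun t => (dx t).continuousAt
  have cy : Continuous y := continuous_iff_continuousAt.2 fun t => (dy t).continuousAt
  have cx' : Continuous x' := continuous_iff_continuousAt.2 fun t => (dx' t).continuousAt
  have cy' : Continuous y' := continuous_iff_continuousAt.2 fun t => (dy' t).continuousAt
  have cF₁ := hF₁.continuous
  have cF₂ := hF₂.continuous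
  refine ⟨x, y, contDiff_two_of_hasDerivAt dx dx' (by fun_prop),
    contDiff_two_of_hasDerivAt dy dy' (by fun_prop), fun t => ?_, fun t => ?_, px, py, ?_⟩
  · rw [ex, ey, (dx' t).deriv, h3]
    simp only [F₁]
    ring
  · rw [ex, ey, (dy' t).deriv]
    simp only [F₂]
    ring
  · rw [ex, ey]
    exact hd
end

section
/- Define 𝓕₁(X₀, Y₀) = Y₀·(3X₀² + Y₀²)/48 and 𝓕₂(X₀, Y₀) = (3·(√3 − 3X₀)·X₀² − (√3 + 3X₀)·Y₀²)/24. Then the set of solutions (X₀, Y₀) ∈ ℝ² of the system 𝓕₁(X₀,Y₀) = 0, 𝓕₂(X₀,Y₀) = 0 with (X₀, Y₀) ≠ (0,0) is exactly {(√3/3, 0)}, and the determinant of the Jacobian matrix ∂(𝓕₁, 𝓕₂)/∂(X₀, Y₀) evaluated at (√3/3, 0) equals 1/384; in particular (√3/3, 0) is a simple zero of (𝓕₁, 𝓕₂). -/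
/-!
If `𝓕₁ = 0` then `Y₀ = 0`, since otherwise `3X₀² + Y₀² > 0`; on the line `Y₀ = 0` the equation
`𝓕₂ = 0` reads `(√3 - 3X₀) X₀² = 0`, whose only nonzero root is `X₀ = √3/3`. At that point the
derivative is `(u, v) ↦ (v/48, -u/8)`, with determinant `(1/48)(1/8) = 1/384`.
-/

/-- The linear map `(u, v) ↦ (v/48, -u/8)`, the derivative of `(𝓕₁, 𝓕₂)` at `(√3/3, 0)`. -/
noncomputable def averagedDeriv : ℝ × ℝ →L[ℝ] ℝ × ℝ :=
  ((1 / 48 : ℝ) • ContinuousLinearMap.snd ℝ ℝ ℝ).prod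
    ((-1 / 8 : ℝ) • ContinuousLinearMap.fst ℝ ℝ ℝ)

theorem det_averagedDeriv : LinearMap.det averagedDeriv.toLinearMap = 1 / 384 := by
  rw [← LinearMap.det_toMatrix (Module.Basis.finTwoProd ℝ), Matrix.det_fin_two]
  simp [LinearMap.toMatrix_apply, averagedDeriv]
  norm_num

theorem hasFDerivAt_averaged :
    HasFDerivAt (fun p : ℝ × ℝ => (p.2 * (3 * p.1 ^ 2 + p.2 ^ 2) / 48,
      (3 * (Real.sqrt 3 - 3 * p.1) * p.1 ^ 2 - (Real.sqrt 3 + 3 * p.1) * p.2 ^ 2) / 24))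
      averagedDeriv (Real.sqrt 3 / 3, 0) := by
  have hs : Real.sqrt 3 * Real.sqrt 3 = 3 := Real.mul_self_sqrt (by norm_num)
  have h1 : HasFDerivAt (fun p : ℝ × ℝ => p.1) (ContinuousLinearMap.fst ℝ ℝ ℝ)
    (Real.sqrt 3 / 3, 0) := hasFDerivAt_fst
  have h2 : HasFDerivAt (fun p : ℝ × ℝ => p.2) (ContinuousLinearMap.snd ℝ ℝ ℝ)
    (Real.sqrt 3 / 3, 0) := hasFDerivAt_snd
  have hF := (h2.mul (((h1.pow 2).const_mul 3).add (h2.pow 2))).mul_const (1 / 48 : ℝ)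
  have hG := (((((h1.const_mul 3).const_sub (Real.sqrt 3)).const_mul 3).mul (h1.pow 2)).sub
    (((h1.const_mul 3).const_add (Real.sqrt 3)).mul (h2.pow 2))).mul_const (1 / 24 : ℝ)
  have h := hF.prodMk hG
  refine (h.congr_fderiv ?_).congr_of_eventuallyEq (Filter.Eventually.of_forall fun p => ?_)
  · ext <;> simp [averagedDeriv] <;> nlinarith [hs]
  · simp [div_eq_mul_inv]

open Real

/-- The averaged functions of Corollary 1:
`𝓕₁(X₀,Y₀) = Y₀(3X₀² + Y₀²)/48` and
`𝓕₂(X₀,Y₀) = (3(√3 − 3X₀)X₀² − (√3 + 3X₀)Y₀²)/24`.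
The nonzero common zeros of `(𝓕₁, 𝓕₂)` are exactly `{(√3/3, 0)}`, the Jacobian
determinant at `(√3/3, 0)` equals `1/384`, and in particular `(√3/3, 0)` is a
simple zero. -/
theorem corollary1_averaged_simple_zero
    (Φ : ℝ × ℝ → ℝ × ℝ)
    (hΦ : ∀ X₀ Y₀ : ℝ, Φ (X₀, Y₀) =
      (Y₀ * (3 * X₀ ^ 2 + Y₀ ^ 2) / 48,
       (3 * (Real.sqrt 3 - 3 * X₀) * X₀ ^ 2 - (Real.sqrt 3 + 3 * X₀) * Y₀ ^ 2) / 24)) :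
    {a : ℝ × ℝ | Φ a = 0 ∧ a ≠ (0, 0)} = {(Real.sqrt 3 / 3, 0)} ∧
      LinearMap.det (fderiv ℝ Φ (Real.sqrt 3 / 3, 0)).toLinearMap = 1 / 384 ∧
      LinearMap.det (fderiv ℝ Φ (Real.sqrt 3 / 3, 0)).toLinearMap ≠ 0 := by
  have hs : Real.sqrt 3 ≠ 0 := by positivity
  have hdet : LinearMap.det (fderiv ℝ Φ (Real.sqrt 3 / 3, 0)).toLinearMap = 1 / 384 := by
    have hfun : Φ = _ := funext fun p => hΦ p.1 p.2
    rw [hfun, hasFDerivAt_averaged.fderiv, det_averagedDeriv]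
  refine ⟨?_, hdet, by rw [hdet]; norm_num⟩
  ext ⟨x, y⟩
  simp only [Set.mem_ofPred_eq, Set.mem_singleton_iff, hΦ, Prod.mk_eq_zero, ne_eq, Prod.mk.injEq]
  constructor
  · rintro ⟨⟨hF, hG⟩, hne⟩
    have hy : y = 0 := by
      by_contra hy
      have : 0 < 3 * x ^ 2 + y ^ 2 := by positivity
      have : y * (3 * x ^ 2 + y ^ 2) / 48 ≠ 0 := by positivity
      exact this hF
    subst hy
    have hx : x ≠ 0 := fun hx => hne ⟨hx, rfl⟩
    have hprod : (Real.sqrt 3 - 3 * x) * x ^ 2 = 0 := by linarith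
    have := (mul_eq_zero.mp hprod).resolve_right (pow_ne_zero 2 hx)
    exact ⟨by linarith, rfl⟩
  · rintro ⟨rfl, rfl⟩
    exact ⟨⟨by ring, by ring⟩, fun h => hs (by linarith [h.1])⟩
end
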